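/- arXiv:1403.4861 — 4 statements merged into one kernel-verified Lean document; each statement's English description precedes it below -/
import Mathlib

section
/- Every planar graph with n vertices and m edges contains a matching of size at least (m − 2n)/3. -/
open SimpleGraph

/-- `H` is a minor of `G`: there are nonempty, pairwise disjoint, connected
branch sets in `G`, one for each vertex of `H`, such that adjacent vertices of
`H` have adjacent branch sets. -/
def SimpleGraph.HasMinor {V W : Type*} (G : SimpleGraph V) (H : SimpleGraph W) : Prop :=
  ∃ f : W → Set V,
    (∀ w, (f w).Nonempty) ∧
    (∀ w, (G.induce (f w)).Connected) ∧
    (Pairwise fun w₁ w₂ => Disjoint (f w₁) (f w₂)) ∧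
    (∀ w₁ w₂, H.Adj w₁ w₂ → ∃ v₁ ∈ f w₁, ∃ v₂ ∈ f w₂, G.Adj v₁ v₂)

/-- Wagner's characterization of planarity: a graph is planar iff it has
neither `K₅` nor `K₃,₃` as a minor. -/
def SimpleGraph.IsPlanar {V : Type*} (G : SimpleGraph V) : Prop :=
  ¬ G.HasMinor (completeGraph (Fin 5)) ∧
  ¬ G.HasMinor (completeBipartiteGraph (Fin 3) (Fin 3))

/-!
By the Tutte–Berge formula there are a matching of size `μ` and a set `A` of vertices such that
`n + |A| ≤ 2μ + odd (G - A)`. Let `B` be the set of isolated vertices of `G - A`. All other odd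
components of `G - A` have at least three vertices, so `3 odd (G - A) ≤ n - |A| + 2|B|` and hence
`n + 2|A| - |B| ≤ 3μ`. The edges avoiding `B` form a graph without `K₅` minor, so there are at
most `3(n - |B|)` of them. The remaining edges join `B` to `A` and form a bipartite graph without
`K₃,₃` minor, so there are at most `2(|A| + |B|)` of them. Altogether `m ≤ 3n + 2|A| - |B|`, which
is at most `2n + 3μ`.

As planarity is given by excluded minors, Euler's formula is not available, and both edge bounds are
derived from minimal counterexamples.
-/

namespace PlanarGraph

section Minors

variable {V W X : Type*} {G : SimpleGraph V} {H : SimpleGraph W} {K : SimpleGraph X}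

lemma connected_induce_singleton (v : V) : (G.induce {v}).Connected := by
  rw [induce_singleton_eq_top]
  exact connected_top

lemma hasMinor_of_isContained (h : H ⊑ G) : G.HasMinor H := by
  obtain ⟨φ⟩ := h
  refine ⟨fun w => {φ w}, fun w => Set.singleton_nonempty _,
    fun w => connected_induce_singleton _, fun a b hab => ?_,
    fun a b hab => ⟨φ a, rfl, φ b, rfl, φ.toHom.map_adj hab⟩⟩
  exact Set.disjoint_singleton.2 (φ.injective.ne hab)

lemma hasMinor_of_le {G' : SimpleGraph V} (h : G' ≤ G) : G.HasMinor G' :=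
  hasMinor_of_isContained (.of_le h)

lemma hasMinor_induce (s : Set V) : G.HasMinor (G.induce s) :=
  hasMinor_of_isContained ⟨Copy.induce G s⟩

lemma reachable_of_subset {s t : Set V} (hst : s ⊆ t) (hs : (G.induce s).Preconnected) {u v : V}
    (hu : u ∈ s) (hv : v ∈ s) : (G.induce t).Reachable ⟨u, hst hu⟩ ⟨v, hst hv⟩ :=
  (hs ⟨u, hu⟩ ⟨v, hv⟩).map (induceHomOfLE G hst).toHom

lemma connected_induce_biUnion {f : W → Set V} (hf : ∀ w, (G.induce (f w)).Connected)
    (hadj : ∀ w₁ w₂, H.Adj w₁ w₂ → ∃ v₁ ∈ f w₁, ∃ v₂ ∈ f w₂, G.Adj v₁ v₂)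
    {t : Set W} (ht : (H.induce t).Connected) : (G.induce (⋃ w ∈ t, f w)).Connected := by
  have hsub (w : t) : f w ⊆ ⋃ w ∈ t, f w := Set.subset_biUnion_of_mem w.2
  have key (w₁ w₂ : t) (h : (H.induce t).Reachable w₁ w₂) :
      ∀ (v₁ : V) (h₁ : v₁ ∈ f w₁) (v₂ : V) (h₂ : v₂ ∈ f w₂),
        (G.induce (⋃ w ∈ t, f w)).Reachable ⟨v₁, hsub w₁ h₁⟩ ⟨v₂, hsub w₂ h₂⟩ := by
    rw [reachable_iff_reflTransGen] at h
    induction h with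
    | refl =>
      exact fun v₁ h₁ v₂ h₂ => reachable_of_subset (hsub w₁) (hf w₁).preconnected h₁ h₂
    | @tail w w' _ hww' ih =>
      intro v₁ h₁ v₂ h₂
      obtain ⟨x, hx, y, hy, hxy⟩ := hadj w w' hww'
      have hstep : (G.induce (⋃ w ∈ t, f w)).Adj ⟨x, hsub w hx⟩ ⟨y, hsub w' hy⟩ := hxy
      exact (ih v₁ h₁ x hx).trans
        (hstep.reachable.trans (reachable_of_subset (hsub w') (hf w').preconnected hy h₂))
  obtain ⟨w₀⟩ := ht.nonempty
  obtain ⟨v₀⟩ := (hf w₀).nonempty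
  have : Nonempty (⋃ w ∈ t, f w : Set V) := ⟨⟨v₀, hsub w₀ v₀.2⟩⟩
  refine ⟨fun ⟨u, hu⟩ ⟨v, hv⟩ => ?_⟩
  obtain ⟨w₁, h₁, hu₁⟩ := Set.mem_iUnion₂.1 hu
  obtain ⟨w₂, h₂, hv₂⟩ := Set.mem_iUnion₂.1 hv
  exact key ⟨w₁, h₁⟩ ⟨w₂, h₂⟩ (ht.preconnected _ _) u hu₁ v hv₂

lemma hasMinor_trans (hGH : G.HasMinor H) (hHK : H.HasMinor K) : G.HasMinor K := by
  obtain ⟨f, -, f_conn, f_disj, f_adj⟩ := hGH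
  obtain ⟨g, -, g_conn, g_disj, g_adj⟩ := hHK
  have conn (k : X) := connected_induce_biUnion f_conn f_adj (g_conn k)
  refine ⟨fun k => ⋃ w ∈ g k, f w, fun k => Set.nonempty_coe_sort.1 (conn k).nonempty, conn,
    fun k l hkl => ?_, fun k l hkl => ?_⟩
  · simp only [Set.disjoint_iUnion_left, Set.disjoint_iUnion_right]
    exact fun w hw w' hw' => f_disj fun h => (g_disj hkl).ne_of_mem hw' hw h
  · obtain ⟨w, hw, w', hw', hww'⟩ := g_adj k l hkl
    obtain ⟨v, hv, v', hv', hvv'⟩ := f_adj w w' hww'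
    exact ⟨v, Set.mem_biUnion hw hv, v', Set.mem_biUnion hw' hv', hvv'⟩

lemma hasMinor_map {f : V → W} (hf : ∀ w, (G.induce (f ⁻¹' {w})).Connected) :
    G.HasMinor (G.map f) := by
  refine ⟨fun w => f ⁻¹' {w}, fun w => Set.nonempty_coe_sort.1 (hf w).nonempty, hf,
    fun w w' hww' => ?_, ?_⟩
  · exact Disjoint.preimage f (Set.disjoint_singleton.2 hww')
  · rintro _ _ ⟨-, a, b, hab, rfl, rfl⟩
    exact ⟨a, rfl, b, rfl, hab⟩

open Classical in
/-- The vertex map of the contraction that identifies `v` with `u`. The vertex `v` is dropped from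
the vertex set, so contracting the edge `uv` of `G` yields `G.map (collapse h)`. -/
noncomputable def collapse {u v : V} (h : u ≠ v) (x : V) : ({v}ᶜ : Set V) :=
  if hx : x = v then ⟨u, h⟩ else ⟨x, hx⟩

lemma collapse_of_ne {u v x : V} (h : u ≠ v) (hx : x ≠ v) : collapse h x = ⟨x, hx⟩ :=
  dif_neg hx

lemma collapse_self {u v : V} (h : u ≠ v) : collapse h v = ⟨u, h⟩ :=
  dif_pos rfl

lemma collapse_eq_iff {u v x : V} (h : u ≠ v) (y : ({v}ᶜ : Set V)) :
    collapse h x = y ↔ x = y ∨ x = v ∧ y = u := by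
  obtain ⟨y, hy⟩ := y
  have hy : y ≠ v := hy
  by_cases hx : x = v
  · subst hx; simp [collapse_self, hy.symm, Subtype.ext_iff, eq_comm]
  · simp [collapse_of_ne h hx, hx, Subtype.ext_iff]

lemma hasMinor_map_collapse {u v : V} (huv : G.Adj u v) :
    G.HasMinor (G.map (collapse huv.ne)) := by
  refine hasMinor_map fun y => ?_
  by_cases hy : (y : V) = u
  · have : collapse huv.ne ⁻¹' {y} = {u, v} := by
      ext x; simp [collapse_eq_iff, hy]
    rw [this]
    exact induce_pair_connected_of_adj huv
  · have : collapse huv.ne ⁻¹' {y} = {(y : V)} := by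
      ext x; simp [collapse_eq_iff, hy]
    rw [this]
    exact connected_induce_singleton _

lemma induce_compl_singleton_le_map_collapse {u v : V} (h : u ≠ v) :
    G.induce {v}ᶜ ≤ G.map (collapse h) := fun x y hxy =>
  ⟨hxy.ne, x, y, hxy, collapse_of_ne h x.2, collapse_of_ne h y.2⟩

lemma connected_induce_image (φ : G →g H) {s : Set V} (hs : (G.induce s).Connected) :
    (H.induce (φ '' s)).Connected :=
  hs.map (induceHom φ (Set.mapsTo_image φ s)) (Set.surjective_mapsTo_image_restrict φ s)

lemma hasMinor_completeGraph_succ {v : V} {n : ℕ}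
    (h : (G.induce (G.neighborSet v)).HasMinor (completeGraph (Fin n))) :
    G.HasMinor (completeGraph (Fin (n + 1))) := by
  obtain ⟨f, f_ne, f_conn, f_disj, f_adj⟩ := h
  have v_notMem (i : Fin n) : v ∉ Subtype.val '' f i := by
    rintro ⟨x, -, hx⟩
    exact G.ne_of_adj x.2 hx.symm
  have v_adj (i : Fin n) : ∃ x ∈ Subtype.val '' f i, G.Adj v x :=
    let ⟨x, hx⟩ := f_ne i
    ⟨x, Set.mem_image_of_mem _ hx, x.2⟩
  refine ⟨Fin.cons {v} fun i => Subtype.val '' f i, ?_, ?_, ?_, ?_⟩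
  · exact Fin.cases (Set.singleton_nonempty v) fun i => (f_ne i).image _
  · refine Fin.cases (connected_induce_singleton v) fun i => ?_
    exact connected_induce_image (Embedding.induce _).toHom (f_conn i)
  · refine pairwise_fin_succ_iff.2 ⟨fun i => Set.disjoint_singleton_right.2 (v_notMem i),
      fun i => Set.disjoint_singleton_left.2 (v_notMem i), fun i j hij => ?_⟩
    exact (Set.disjoint_image_iff Subtype.val_injective).2 (f_disj hij)
  · refine pairwise_fin_succ_iff.2 ⟨fun i => ?_, fun i => ⟨v, rfl, v_adj i⟩, fun i j hij => ?_⟩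
    · obtain ⟨x, hx, hvx⟩ := v_adj i
      exact ⟨x, hx, v, rfl, hvx.symm⟩
    · obtain ⟨x, hx, y, hy, hxy⟩ := f_adj i j hij
      exact ⟨x, ⟨x, hx, rfl⟩, y, ⟨y, hy, rfl⟩, hxy⟩

lemma hasMinor_completeBipartiteGraph {f : W → Set V} {g : X → V}
    (f_conn : ∀ i, (G.induce (f i)).Connected)
    (f_disj : Pairwise fun i j => Disjoint (f i) (f j)) (hg : g.Injective)
    (hfg : ∀ i j, g j ∉ f i) (hadj : ∀ i j, ∃ x ∈ f i, G.Adj x (g j)) :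
    G.HasMinor (completeBipartiteGraph W X) := by
  refine ⟨Sum.elim f fun j => {g j}, ?_, ?_, ?_, ?_⟩
  · rintro (i | j)
    exacts [Set.nonempty_coe_sort.1 (f_conn i).nonempty, Set.singleton_nonempty _]
  · rintro (i | j)
    exacts [f_conn i, connected_induce_singleton _]
  · rintro (i | j) (i' | j') h
    · exact f_disj (by simpa using h)
    · exact Set.disjoint_singleton_right.2 (hfg i j')
    · exact Set.disjoint_singleton_left.2 (hfg i' j)
    · exact Set.disjoint_singleton.2 (hg.ne (by simpa using h))
  · rintro (i | j) (i' | j') h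
    · simp at h
    · obtain ⟨x, hx, hadj⟩ := hadj i j'
      exact ⟨x, hx, g j', rfl, hadj⟩
    · obtain ⟨x, hx, hadj⟩ := hadj i' j
      exact ⟨g j, rfl, x, hx, hadj.symm⟩
    · simp at h

end Minors

section EdgeCount

variable {V : Type*} {G : SimpleGraph V}

lemma ncard_edgeSet_eq_card_edgeFinset [Fintype G.edgeSet] :
    G.edgeSet.ncard = G.edgeFinset.card := by
  rw [← coe_edgeFinset, Set.ncard_coe_finset]

lemma ncard_neighborSet_eq_degree (v : V) [Fintype (G.neighborSet v)] :
    (G.neighborSet v).ncard = G.degree v := by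
  rw [← coe_neighborFinset, Set.ncard_coe_finset, card_neighborFinset_eq_degree]

lemma exists_le_ncard_edgeSet_eq {k : ℕ} (h : k ≤ G.edgeSet.ncard) :
    ∃ G' ≤ G, G'.edgeSet.ncard = k := by
  obtain ⟨s, hs, hk⟩ := Set.exists_subset_card_eq h
  refine ⟨fromEdgeSet s, (fromEdgeSet_mono hs).trans_eq (fromEdgeSet_edgeSet G), ?_⟩
  rw [edgeSet_fromEdgeSet, sdiff_eq_left.2, hk]
  exact Set.disjoint_left.2 fun e he hd => G.not_isDiag_of_mem_edgeSet (hs he) hd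

lemma ncard_edgeSet_induce (G : SimpleGraph V) (s : Set V) :
    (G.induce s).edgeSet.ncard = (G.edgeSet ∩ s.sym2).ncard := by
  rw [← Set.ncard_image_of_injective _ (Sym2.map.injective Subtype.val_injective)]
  congr 1
  ext e
  constructor
  · rintro ⟨⟨x, y⟩, hxy, rfl⟩
    exact ⟨hxy, x.2, y.2⟩
  · induction e with
    | _ x y => exact fun ⟨hxy, hx, hy⟩ => ⟨s(⟨x, hx⟩, ⟨y, hy⟩), hxy, rfl⟩

lemma ncard_neighborSet_induce (s : Set V) (v : s) :
    ((G.induce s).neighborSet v).ncard = (G.neighborSet v ∩ s).ncard := by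
  rw [← Set.ncard_image_of_injective _ Subtype.val_injective]
  congr 1
  ext w
  simp

variable [Finite V]

lemma two_mul_ncard_edgeSet_le (G : SimpleGraph V) :
    2 * G.edgeSet.ncard ≤ Nat.card V * (Nat.card V - 1) := by
  classical
  have := Fintype.ofFinite V
  have h := G.card_edgeFinset_le_card_choose_two
  rw [Nat.choose_two_right] at h
  rw [ncard_edgeSet_eq_card_edgeFinset, Nat.card_eq_fintype_card]
  omega

lemma mul_card_le_two_mul_ncard_edgeSet {k : ℕ} (h : ∀ v, k ≤ (G.neighborSet v).ncard) :
    k * Nat.card V ≤ 2 * G.edgeSet.ncard := by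
  classical
  have := Fintype.ofFinite V
  rw [ncard_edgeSet_eq_card_edgeFinset, ← G.sum_degrees_eq_twice_card_edges, mul_comm,
    Nat.card_eq_fintype_card, ← smul_eq_mul, ← Finset.card_univ]
  exact Finset.card_nsmul_le_sum _ _ _ fun v _ => ncard_neighborSet_eq_degree (G := G) v ▸ h v

lemma ncard_edgeSet_induce_compl_singleton (G : SimpleGraph V) (v : V) :
    (G.induce {v}ᶜ).edgeSet.ncard + (G.neighborSet v).ncard = G.edgeSet.ncard := by
  classical
  have := Fintype.ofFinite V
  simp only [ncard_edgeSet_eq_card_edgeFinset, ncard_neighborSet_eq_degree,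
    card_edgeFinset_induce_compl_singleton, card_edgeFinset_deleteIncidenceSet]
  exact Nat.sub_add_cancel (G.degree_le_card_edgeFinset v)

lemma ncard_edgeSet_le_map_collapse {u v : V} (h : u ≠ v) :
    G.edgeSet.ncard ≤ (G.map (collapse h)).edgeSet.ncard +
      (insert u (G.neighborSet u) ∩ G.neighborSet v).ncard := by
  set N := G.neighborSet v \ insert u (G.neighborSet u)
  have hsplit : N.ncard + (insert u (G.neighborSet u) ∩ G.neighborSet v).ncard =
      (G.neighborSet v).ncard := by
    rw [Set.inter_comm, add_comm, Set.ncard_inter_add_ncard_sdiff_eq_ncard]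
  have hdisj : Disjoint (G.induce {v}ᶜ).edgeSet ((fun w => s(⟨u, h⟩, collapse h w)) '' N) := by
    refine Set.disjoint_right.2 ?_
    rintro _ ⟨w, hw, rfl⟩ (huw : G.Adj u (collapse h w))
    rw [collapse_of_ne h (G.ne_of_adj hw.1).symm] at huw
    exact hw.2 (Or.inr huw)
  have hinj : N.InjOn fun w => s((⟨u, h⟩ : ({v}ᶜ : Set V)), collapse h w) := by
    intro w hw w' hw' hww'
    have := Sym2.congr_right.1 hww'
    rw [collapse_of_ne h (G.ne_of_adj hw.1).symm, collapse_of_ne h (G.ne_of_adj hw'.1).symm] at this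
    exact congrArg Subtype.val this
  have hsub : (G.induce {v}ᶜ).edgeSet ∪ (fun w => s(⟨u, h⟩, collapse h w)) '' N ⊆
      (G.map (collapse h)).edgeSet := by
    refine Set.union_subset (edgeSet_mono (induce_compl_singleton_le_map_collapse h)) ?_
    rintro _ ⟨w, hw, rfl⟩
    refine ⟨fun huw => hw.2 (Or.inl ?_), v, w, hw.1, collapse_self h, rfl⟩
    dsimp only at huw
    rw [collapse_of_ne h (G.ne_of_adj hw.1).symm] at huw
    exact (congrArg Subtype.val huw).symm
  have hcard := Set.ncard_le_ncard hsub
  rw [Set.ncard_union_eq hdisj, hinj.ncard_image] at hcard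
  have := ncard_edgeSet_induce_compl_singleton G v
  omega

lemma ncard_edgeSet_add_induce_inter_le {s t : Set V}
    (hst : ∀ ⦃x y⦄, G.Adj x y → x ∈ s ∧ y ∈ s ∨ x ∈ t ∧ y ∈ t) :
    G.edgeSet.ncard + (G.induce (s ∩ t)).edgeSet.ncard ≤
      (G.induce s).edgeSet.ncard + (G.induce t).edgeSet.ncard := by
  have hunion : G.edgeSet ∩ s.sym2 ∪ G.edgeSet ∩ t.sym2 = G.edgeSet := by
    rw [← Set.inter_union_distrib_left, Set.inter_eq_left]
    intro e
    induction e with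
    | _ x y => exact fun hxy => hst hxy
  have hcard := Set.ncard_union_add_ncard_inter (G.edgeSet ∩ s.sym2) (G.edgeSet ∩ t.sym2)
  rw [hunion, ← Set.inter_inter_distrib_left, ← Set.sym2_inter] at hcard
  simpa only [ncard_edgeSet_induce] using hcard.le

lemma ncard_edgeSet_le_map_collapse_of_adj {u v : V} (huv : G.Adj u v) :
    G.edgeSet.ncard ≤ (G.map (collapse huv.ne)).edgeSet.ncard +
      (G.commonNeighbors u v).ncard + 1 := by
  have h := ncard_edgeSet_le_map_collapse (G := G) huv.ne
  rw [Set.insert_inter_of_mem (by exact huv.symm),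
    Set.ncard_insert_of_notMem (by simp)] at h
  exact h

end EdgeCount

section CompleteMinor

universe u

lemma card_compl_singleton {V : Type*} [Finite V] (v : V) :
    Nat.card ({v}ᶜ : Set V) + 1 = Nat.card V := by
  rw [Nat.card_coe_set_eq, ← Set.ncard_singleton v, add_comm, Set.ncard_add_ncard_compl]

-- In a minimal counterexample, vertex deletion and edge contraction must destroy many edges.
lemma lt_ncard_neighborSet_and_le_ncard_commonNeighbors {V : Type u} [Finite V]
    {G : SimpleGraph V} {a n : ℕ} (hV : Nat.card V = n + 1)
    (ih : ∀ {W : Type u} [Finite W] (H : SimpleGraph W), Nat.card W = n → G.HasMinor H →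
      2 * H.edgeSet.ncard + a * (a + 1) ≤ 2 * a * n)
    (hm : 2 * G.edgeSet.ncard + a * (a + 1) = 2 * a * (n + 1) + 2) :
    (∀ v, a < (G.neighborSet v).ncard) ∧
      ∀ u v, G.Adj u v → a ≤ (G.commonNeighbors u v).ncard := by
  have hcard (v : V) := card_compl_singleton v
  simp only [hV, add_left_inj] at hcard
  refine ⟨fun v => ?_, fun u v huv => ?_⟩
  · have := ih _ (hcard v) (hasMinor_induce _)
    have := ncard_edgeSet_induce_compl_singleton G v
    linarith
  · have := ih _ (hcard v) (hasMinor_map_collapse huv)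
    have := ncard_edgeSet_le_map_collapse_of_adj huv
    linarith

lemma add_le_two_mul_ncard_neighborSet {V : Type u} [Finite V] {G : SimpleGraph V} {a : ℕ} {v : V}
    (ih : ∀ {W : Type u} [Finite W] (H : SimpleGraph W), a ≤ Nat.card W →
      ¬ H.HasMinor (completeGraph (Fin (a + 2))) →
      2 * H.edgeSet.ncard + a * (a + 1) ≤ 2 * a * Nat.card W)
    (hG : ¬ G.HasMinor (completeGraph (Fin (a + 3)))) (hv : a ≤ (G.neighborSet v).ncard)
    (hadj : ∀ w, G.Adj v w → a + 1 ≤ (G.commonNeighbors v w).ncard) :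
    (a + 1) * (G.neighborSet v).ncard + a * (a + 1) ≤ 2 * a * (G.neighborSet v).ncard := by
  rw [← Nat.card_coe_set_eq] at hv ⊢
  have hdeg (w : G.neighborSet v) : a + 1 ≤ ((G.induce (G.neighborSet v)).neighborSet w).ncard := by
    rw [ncard_neighborSet_induce, Set.inter_comm]
    exact hadj w w.2
  have := mul_card_le_two_mul_ncard_edgeSet hdeg
  have := ih _ hv fun h => hG (hasMinor_completeGraph_succ h)
  omega

lemma exists_le_two_mul_ncard_edgeSet_eq {V : Type*} {G : SimpleGraph V} {a n : ℕ} (ha : a ≤ n)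
    (hm : 2 * a * n < 2 * G.edgeSet.ncard + a * (a + 1)) :
    ∃ G' ≤ G, 2 * G'.edgeSet.ncard + a * (a + 1) = 2 * a * n + 2 := by
  obtain ⟨r, hr⟩ := Nat.even_mul_succ_self a
  have hrn : r ≤ a * n + 1 := by nlinarith
  obtain ⟨G', hG'G, hm'⟩ := exists_le_ncard_edgeSet_eq (G := G) (k := a * n + 1 - r)
    (by rw [hr] at hm; rw [Nat.sub_le_iff_le_add]; linarith)
  refine ⟨G', hG'G, ?_⟩
  rw [hm', hr, mul_assoc]
  omega

-- Let `d` be the minimum degree of a minimal counterexample for `a + 1`. Counting edges gives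
-- `d ≤ 2a + 1`, while the neighbourhood of a vertex of degree `d` has minimum degree at least
-- `a + 1` and no `K_(a+2)` minor, so that `a(a + 1) ≤ (a - 1)d`. For `a ≥ 3` there is no
-- contradiction any more, whence the restriction.
theorem two_mul_ncard_edgeSet_le_of_not_hasMinor_completeGraph {a : ℕ} (ha : a ≤ 3) {V : Type u}
    [Finite V] (G : SimpleGraph V) (hV : a ≤ Nat.card V)
    (hG : ¬ G.HasMinor (completeGraph (Fin (a + 2)))) :
    2 * G.edgeSet.ncard + a * (a + 1) ≤ 2 * a * Nat.card V := by
  induction a generalizing V with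
  | zero =>
    have : G = ⊥ := by
      refine eq_bot_iff_forall_not_adj.2 fun u v huv => hG ?_
      exact hasMinor_completeGraph_succ (v := u) <|
        hasMinor_completeGraph_succ (v := ⟨v, huv⟩) <| hasMinor_of_isContained .of_isEmpty
    simp [this]
  | succ a ih_a =>
    obtain ⟨n, hn⟩ : ∃ n, n = Nat.card V := ⟨_, rfl⟩
    rw [← hn] at hV
    induction n, hV using Nat.le_induction generalizing V with
    | base =>
      have := two_mul_ncard_edgeSet_le G
      rw [← hn] at this ⊢
      simp only [add_tsub_cancel_right] at this
      linarith
    | succ n han ih_n =>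
      by_contra! hm
      obtain ⟨G', hG'G, hm'⟩ := exists_le_two_mul_ncard_edgeSet_eq (by omega) hm
      have hG' := fun h => hG (hasMinor_trans (hasMinor_of_le hG'G) h)
      rw [← hn] at hm'
      obtain ⟨hdeg, hcommon⟩ := lt_ncard_neighborSet_and_le_ncard_commonNeighbors hn.symm
        (fun H hH hGH => hH ▸ ih_n H (fun h => hG' (hasMinor_trans hGH h)) hH.symm) hm'
      have : Nonempty V := (Nat.card_pos_iff.1 (by omega)).1
      obtain ⟨v, hv⟩ := Finite.exists_min fun v => (G'.neighborSet v).ncard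
      have hsum := mul_card_le_two_mul_ncard_edgeSet hv
      have hnbhd := add_le_two_mul_ncard_neighborSet (fun H hH => ih_a (by omega) H hH)
        hG' (by grind) (fun w => hcommon v w)
      have hpos := hdeg v
      have ha' : a ≤ 2 := Nat.le_of_succ_le_succ ha
      rw [← hn] at hsum
      interval_cases a <;> nlinarith

lemma ncard_edgeSet_le_three_mul_of_not_hasMinor_completeGraph {V : Type*} [Finite V]
    {G : SimpleGraph V} (hG : ¬ G.HasMinor (completeGraph (Fin 5))) :
    G.edgeSet.ncard ≤ 3 * Nat.card V := by
  by_cases hV : 3 ≤ Nat.card V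
  · have := two_mul_ncard_edgeSet_le_of_not_hasMinor_completeGraph le_rfl G hV hG
    omega
  · have := two_mul_ncard_edgeSet_le G
    interval_cases Nat.card V <;> omega

end CompleteMinor

section BipartiteMinor

universe u

variable {V : Type u} {G : SimpleGraph V}

lemma coloring_eq_of_adj_adj (c : G.Coloring (Fin 2)) {b u v : V} (hu : G.Adj b u)
    (hv : G.Adj b v) : c u = c v := by
  have := c.valid hu
  have := c.valid hv
  omega

lemma colorable_map_collapse {n : ℕ} (c : G.Coloring (Fin n)) {u v : V} (h : u ≠ v)
    (huv : c u = c v) : (G.map (collapse h)).Colorable n := by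
  have hc (x : V) : c (collapse h x : V) = c x := by
    by_cases hx : x = v
    · rw [hx, collapse_self, huv]
    · rw [collapse_of_ne h hx]
  refine ⟨Coloring.mk (fun y => c y) ?_⟩
  rintro _ _ ⟨-, x, y, hxy, rfl, rfl⟩
  simpa only [hc] using c.valid hxy

lemma hasMinor_map_collapse_induce {b : V} {u v : ({b}ᶜ : Set V)} (hu : G.Adj b u)
    (hv : G.Adj b v) (huv : u ≠ v) : G.HasMinor ((G.induce {b}ᶜ).map (collapse huv)) := by
  have huv' : (G.map (collapse hu.ne')).Adj u v :=
    ⟨huv, b, v, hv, collapse_self _, collapse_of_ne _ hv.ne'⟩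
  exact hasMinor_trans (hasMinor_map_collapse hu.symm) <|
    hasMinor_trans (hasMinor_map_collapse huv') <|
      hasMinor_of_le (map_monotone _ (induce_compl_singleton_le_map_collapse _))

lemma exists_connected_induce_of_mem {s : Set V} {v : V} (hv : v ∈ s) :
    ∃ K ⊆ s, v ∈ K ∧ (G.induce K).Connected ∧ ∀ x ∈ K, ∀ y ∈ s, G.Adj x y → y ∈ K := by
  let C := (G.induce s).connectedComponentMk ⟨v, hv⟩
  refine ⟨Subtype.val '' C.supp, Subtype.coe_image_subset s _, ⟨⟨v, hv⟩, rfl, rfl⟩,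
    connected_induce_image (Embedding.induce s).toHom C.connected_toSimpleGraph, ?_⟩
  rintro _ ⟨x, hx, rfl⟩ y hy hxy
  exact ⟨⟨y, hy⟩, C.mem_supp_of_adj_mem_supp hx hxy, rfl⟩

/-- The bound `m ≤ 2n - 4` holds for all bipartite minors of `G` that have fewer vertices than `G`,
but at least three. This is the induction hypothesis in the proof of that bound for bipartite graphs
without `K₃,₃` minor. -/
def SmallerBipartiteMinorsAreSparse (G : SimpleGraph V) : Prop :=
  ∀ {W : Type u} [Finite W] (H : SimpleGraph W), G.HasMinor H → H.IsBipartite →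
    3 ≤ Nat.card W → Nat.card W < Nat.card V → H.edgeSet.ncard + 4 ≤ 2 * Nat.card W

lemma two_le_ncard_commonNeighbors_sdiff [Finite V] {b u v : V} (hG : G.IsBipartite)
    (ih : SmallerBipartiteMinorsAreSparse G)
    (hV : 5 ≤ Nat.card V) (hm : G.edgeSet.ncard + 3 = 2 * Nat.card V)
    (hb : (G.neighborSet b).ncard = 3) (hu : G.Adj b u) (hv : G.Adj b v) (huv : u ≠ v) :
    2 ≤ (G.commonNeighbors u v \ {b}).ncard := by
  obtain ⟨c⟩ := hG
  have hcuv := coloring_eq_of_adj_adj c hu hv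
  lift u to ({b}ᶜ : Set V) using hu.ne'
  lift v to ({b}ᶜ : Set V) using hv.ne'
  replace huv : u ≠ v := fun h => huv (congrArg Subtype.val h)
  have hcol : ((G.induce {b}ᶜ).map (collapse huv)).IsBipartite :=
    colorable_map_collapse (c.comp (Embedding.induce _).toHom) huv hcuv
  have hcard₁ := card_compl_singleton b
  have hcard₂ : _ = Nat.card ({b}ᶜ : Set V) := card_compl_singleton v
  have hbound := ih _ (hasMinor_map_collapse_induce hu hv huv) hcol (by omega) (by omega)
  have hdelete := ncard_edgeSet_induce_compl_singleton G b
  have hcollapse := ncard_edgeSet_le_map_collapse (G := G.induce {b}ᶜ) huv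
  have himage : Subtype.val '' (insert u ((G.induce {b}ᶜ).neighborSet u) ∩
      (G.induce {b}ᶜ).neighborSet v) ⊆ G.commonNeighbors u v \ {b} := by
    rintro _ ⟨x, ⟨rfl | hux, hvx⟩, rfl⟩
    · exact absurd hcuv.symm (c.valid hvx)
    · exact ⟨⟨hux, hvx⟩, x.2⟩
  have hlost := Set.ncard_le_ncard himage
  rw [Set.ncard_image_of_injective _ Subtype.val_injective] at hlost
  omega

-- The two edges inside the separator compensate for counting its three vertices twice:
-- `(2|s| - 4) + (2|t| - 4) - 2 = 2n - 4`.
lemma ncard_edgeSet_add_four_le_of_separation [Finite V] {s t : Set V} {x y z : V}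
    (hG : G.IsBipartite) (ih : SmallerBipartiteMinorsAreSparse G)
    (hst : ∀ ⦃x y⦄, G.Adj x y → x ∈ s ∧ y ∈ s ∨ x ∈ t ∧ y ∈ t) (hs : s ≠ Set.univ)
    (ht : t ≠ Set.univ) (hunion : s ∪ t = Set.univ) (hinter : s ∩ t = {x, y, z}) (hxy : x ≠ y)
    (hxz : G.Adj x z) (hyz : G.Adj y z) :
    G.edgeSet.ncard + 4 ≤ 2 * Nat.card V := by
  have hthree : (s ∩ t).ncard = 3 := hinter ▸ Set.ncard_eq_three.2
    ⟨x, y, z, hxy, hxz.ne, hyz.ne, rfl⟩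
  have hbound (r : Set V) (hr : r ≠ Set.univ) (hsub : s ∩ t ⊆ r) :
      (G.induce r).edgeSet.ncard + 4 ≤ 2 * r.ncard :=
    ih (G.induce r) (hasMinor_induce r) (hG.of_hom (Embedding.induce r).toHom)
      (hthree ▸ Set.ncard_le_ncard hsub) (Set.ncard_lt_card hr)
  have htwo : 2 ≤ (G.induce (s ∩ t)).edgeSet.ncard := by
    have hsub : {s(x, z), s(y, z)} ⊆ G.edgeSet ∩ (s ∩ t).sym2 := by
      rintro _ (rfl | rfl) <;> simp [hinter, hxz, hyz]
    have hne : s(x, z) ≠ s(y, z) := by simp [hxy, hxz.ne]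
    rw [ncard_edgeSet_induce, ← Set.ncard_pair hne]
    exact Set.ncard_le_ncard hsub
  have := hbound s hs Set.inter_subset_left
  have := hbound t ht Set.inter_subset_right
  have := ncard_edgeSet_add_induce_inter_le hst
  have := Set.ncard_union_add_ncard_inter s t
  rw [hunion, Set.ncard_univ] at this
  omega

lemma four_mul_ncard_edgeSet_le_of_isBipartite [Finite V] (hG : G.IsBipartite) :
    4 * G.edgeSet.ncard ≤ Nat.card V ^ 2 := by
  have h := hG.four_mul_encard_edgeSet_le
  rw [← G.edgeSet.toFinite.cast_ncard_eq, ENat.card_eq_coe_natCard] at h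
  exact_mod_cast h

lemma ncard_edgeSet_add_four_le_of_neighborSet_subset [Finite V] {K : Set V} {b a₁ a₂ x y : V}
    (hG : G.IsBipartite) (ih : SmallerBipartiteMinorsAreSparse G)
    (hb : G.neighborSet b ⊆ K ∪ {a₁, a₂}) (hKsub : K ⊆ {b, a₁, a₂, x, y}ᶜ)
    (hKclosed : ∀ u ∈ K, ∀ v ∈ ({b, a₁, a₂, x, y}ᶜ : Set V), G.Adj u v → v ∈ K)
    (hKy : ∀ v ∈ K, ¬ G.Adj v y) (ha : a₁ ≠ a₂) (ha₁ : a₁ ≠ b) (ha₂ : a₂ ≠ b) (hxb : x ≠ b)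
    (hyb : y ≠ b) (hxy : x ≠ y) (ha₁x : G.Adj a₁ x) (ha₂x : G.Adj a₂ x) (ha₁y : a₁ ≠ y)
    (ha₂y : a₂ ≠ y) : G.edgeSet.ncard + 4 ≤ 2 * Nat.card V := by
  have hKdisj (v : V) (hv : v ∈ ({b, a₁, a₂, x, y} : Set V)) : v ∉ K := fun h => hKsub h hv
  have hside {u v : V} (hu : u ∈ insert b K) (huv : G.Adj u v) :
      u ∈ K ∪ {b, a₁, a₂, x} ∧ v ∈ K ∪ {b, a₁, a₂, x} := by
    obtain rfl | hu := hu
    · have := hb huv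
      grind
    · have := hKclosed u hu v
      have : v ≠ y := fun h => hKy u hu (h ▸ huv)
      grind
  refine ncard_edgeSet_add_four_le_of_separation (s := K ∪ {b, a₁, a₂, x}) (t := (insert b K)ᶜ)
    hG ih ?_ ?_ ?_ ?_ ?_ ha ha₁x ha₂x
  · intro u v huv
    by_cases hu : u ∈ insert b K
    · exact Or.inl (hside hu huv)
    · by_cases hv : v ∈ insert b K
      · exact Or.inl (hside hv huv.symm).symm
      · exact Or.inr ⟨hu, hv⟩
  · refine (Set.ne_univ_iff_exists_notMem _).2 ⟨y, ?_⟩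
    grind
  · exact fun h => (h ▸ Set.mem_univ b : b ∈ (insert b K)ᶜ) (Set.mem_insert b K)
  · grind
  · grind

lemma hasMinor_completeBipartiteGraph_three_three {K : Set V} {a₁ a₂ b x y : V}
    (hKconn : (G.induce K).Connected) (hKsub : K ⊆ {b, a₁, a₂, x, y}ᶜ) (ha : a₁ ≠ a₂)
    (hxb : x ≠ b) (hyb : y ≠ b) (hxy : x ≠ y)
    (h₁ : G.Adj a₁ b ∧ G.Adj a₁ x ∧ G.Adj a₁ y) (h₂ : G.Adj a₂ b ∧ G.Adj a₂ x ∧ G.Adj a₂ y)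
    (hb : ∃ v ∈ K, G.Adj v b) (hx : ∃ v ∈ K, G.Adj v x) (hy : ∃ v ∈ K, G.Adj v y) :
    G.HasMinor (completeBipartiteGraph (Fin 3) (Fin 3)) := by
  have hK (v : V) (hv : v ∈ ({b, a₁, a₂, x, y} : Set V)) : v ∉ K := fun h => hKsub h hv
  simp only [Set.mem_insert_iff, Set.mem_singleton_iff, forall_eq_or_imp, forall_eq] at hK
  refine hasMinor_completeBipartiteGraph (f := ![{a₁}, {a₂}, K]) (g := ![b, x, y]) ?_ ?_ ?_ ?_ ?_
  · simp [Fin.forall_fin_succ, hKconn]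
  · simp [Pairwise, Fin.forall_fin_succ, hK, ha, ha.symm]
  · simp [Function.Injective, Fin.forall_fin_succ, hxb, hyb, hxy, hxb.symm, hyb.symm, hxy.symm]
  · simp [Fin.forall_fin_succ, hK, h₁.1.ne', h₁.2.1.ne', h₁.2.2.ne', h₂.1.ne', h₂.2.1.ne',
      h₂.2.2.ne']
  · simp [Fin.forall_fin_succ, h₁, h₂, hb, hx, hy]

-- Let `K` be the component of `a₃` after removing `b`, `a₁`, `a₂`, `x` and `y`. If `K` is adjacent
-- to both `x` and `y`, then `{a₁}`, `{a₂}`, `K` and `{b}`, `{x}`, `{y}` are the branch sets of a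
-- `K₃,₃` minor. If not, `a₁`, `a₂` and one of `x`, `y` separate `K ∪ {b}` from the rest.
lemma ncard_edgeSet_add_four_le_of_neighborSet_eq [Finite V] {b a₁ a₂ a₃ x y : V}
    (hG : G.IsBipartite) (hK : ¬ G.HasMinor (completeBipartiteGraph (Fin 3) (Fin 3)))
    (ih : SmallerBipartiteMinorsAreSparse G)
    (hb : G.neighborSet b = {a₁, a₂, a₃}) (h₁₂ : a₁ ≠ a₂) (h₁₃ : a₁ ≠ a₃) (h₂₃ : a₂ ≠ a₃)
    (hx : x ∈ G.commonNeighbors a₁ a₂ \ {b}) (hy : y ∈ G.commonNeighbors a₁ a₂ \ {b})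
    (hxy : x ≠ y) : G.edgeSet.ncard + 4 ≤ 2 * Nat.card V := by
  obtain ⟨⟨ha₁x : G.Adj a₁ x, ha₂x : G.Adj a₂ x⟩, hxb : x ≠ b⟩ := hx
  obtain ⟨⟨ha₁y : G.Adj a₁ y, ha₂y : G.Adj a₂ y⟩, hyb : y ≠ b⟩ := hy
  have hba₁ : G.Adj b a₁ := by simp [← mem_neighborSet, hb]
  have hba₂ : G.Adj b a₂ := by simp [← mem_neighborSet, hb]
  have hba₃ : G.Adj b a₃ := by simp [← mem_neighborSet, hb]
  have ha₃ : ¬ G.Adj a₁ a₃ := hG.elim fun c h => c.valid h (coloring_eq_of_adj_adj c hba₁ hba₃)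
  have ha₃mem : a₃ ∈ ({b, a₁, a₂, x, y}ᶜ : Set V) := by
    have ha₃x : a₃ ≠ x := fun h => ha₃ (h ▸ ha₁x)
    have ha₃y : a₃ ≠ y := fun h => ha₃ (h ▸ ha₁y)
    simp [hba₃.ne', h₁₃.symm, h₂₃.symm, ha₃x, ha₃y]
  obtain ⟨K, hKsub, ha₃K, hKconn, hKclosed⟩ := exists_connected_induce_of_mem (G := G) ha₃mem
  have hbK : G.neighborSet b ⊆ K ∪ {a₁, a₂} := by simp [hb, Set.insert_subset_iff, ha₃K]
  by_cases hKx : ∃ v ∈ K, G.Adj v x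
  · by_cases hKy : ∃ v ∈ K, G.Adj v y
    · exact absurd (hasMinor_completeBipartiteGraph_three_three hKconn hKsub h₁₂ hxb hyb hxy
        ⟨hba₁.symm, ha₁x, ha₁y⟩ ⟨hba₂.symm, ha₂x, ha₂y⟩ ⟨a₃, ha₃K, hba₃.symm⟩ hKx hKy) hK
    · exact ncard_edgeSet_add_four_le_of_neighborSet_subset (x := x) (y := y) hG ih hbK hKsub
        hKclosed (by simpa using hKy) h₁₂ hba₁.ne' hba₂.ne' hxb hyb hxy ha₁x ha₂x ha₁y.ne ha₂y.ne
  · rw [Set.pair_comm x y] at hKsub hKclosed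
    exact ncard_edgeSet_add_four_le_of_neighborSet_subset (x := y) (y := x) hG ih hbK hKsub
      hKclosed (by simpa using hKx) h₁₂ hba₁.ne' hba₂.ne' hyb hxb hxy.symm ha₁y ha₂y ha₁x.ne ha₂x.ne

theorem ncard_edgeSet_add_four_le_of_isBipartite [Finite V] (hV : 3 ≤ Nat.card V)
    (hG : G.IsBipartite) (hK : ¬ G.HasMinor (completeBipartiteGraph (Fin 3) (Fin 3))) :
    G.edgeSet.ncard + 4 ≤ 2 * Nat.card V := by
  obtain ⟨n, hn⟩ : ∃ n, n = Nat.card V := ⟨_, rfl⟩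
  induction n using Nat.strong_induction_on generalizing V with
  | _ n ih =>
    by_contra! hm
    obtain ⟨G', hG'G, hm'⟩ := exists_le_ncard_edgeSet_eq (G := G) (k := 2 * Nat.card V - 3)
      (by omega)
    have hbip : G'.IsBipartite := hG.mono_left hG'G
    have hK' := fun h => hK (hasMinor_trans (hasMinor_of_le hG'G) h)
    have ih' : SmallerBipartiteMinorsAreSparse G' := fun H hGH hH hW hWV =>
      ih _ (hn ▸ hWV) hW hH (fun h => hK' (hasMinor_trans hGH h)) rfl
    have hV5 : 5 ≤ Nat.card V := by
      by_contra! h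
      have := four_mul_ncard_edgeSet_le_of_isBipartite hbip
      interval_cases Nat.card V <;> omega
    have : Nonempty V := (Nat.card_pos_iff.1 (by omega)).1
    obtain ⟨b, hb⟩ := Finite.exists_min fun v => (G'.neighborSet v).ncard
    have hsum := mul_card_le_two_mul_ncard_edgeSet hb
    have hcard := card_compl_singleton b
    have hdelete := ncard_edgeSet_induce_compl_singleton G' b
    have hbound := ih' _ (hasMinor_induce {b}ᶜ) (hbip.of_hom (Embedding.induce _).toHom)
      (by omega) (by omega)
    have hb3 : (G'.neighborSet b).ncard = 3 := by
      have : (G'.neighborSet b).ncard < 4 := by by_contra!; nlinarith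
      omega
    obtain ⟨a₁, a₂, a₃, h₁₂, h₁₃, h₂₃, hN⟩ := Set.ncard_eq_three.1 hb3
    have hcommon := two_le_ncard_commonNeighbors_sdiff (u := a₁) (v := a₂) hbip ih' hV5 (by omega)
      hb3 (by simp [← mem_neighborSet, hN]) (by simp [← mem_neighborSet, hN]) h₁₂
    obtain ⟨x, y, hx, hy, hxy⟩ := (Set.one_lt_ncard_iff).1 hcommon
    have := ncard_edgeSet_add_four_le_of_neighborSet_eq hbip hK' ih' hN h₁₂ h₁₃ h₂₃ hx hy hxy
    omega

lemma ncard_edgeSet_le_two_mul_of_isBipartite [Finite V] (hG : G.IsBipartite)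
    (hK : ¬ G.HasMinor (completeBipartiteGraph (Fin 3) (Fin 3))) :
    G.edgeSet.ncard ≤ 2 * Nat.card V := by
  by_cases hV : 3 ≤ Nat.card V
  · have := ncard_edgeSet_add_four_le_of_isBipartite hV hG hK
    omega
  · have := four_mul_ncard_edgeSet_le_of_isBipartite hG
    interval_cases Nat.card V <;> omega

end BipartiteMinor

section TutteBerge

variable {V W : Type*} {G : SimpleGraph V} {H : SimpleGraph W}

lemma two_mul_ncard_edgeSet_of_isMatching [Finite V] {M : G.Subgraph} (hM : M.IsMatching) :
    2 * M.edgeSet.ncard = M.verts.ncard := by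
  classical
  cases nonempty_fintype V
  rw [← M.image_coe_edgeSet_coe,
    Set.ncard_image_of_injective _ (Sym2.map.injective Subtype.val_injective),
    ncard_edgeSet_eq_card_edgeFinset, ← sum_degrees_eq_twice_card_edges]
  trans ∑ _ : M.verts, 1
  · refine Finset.sum_congr rfl fun v _ => ?_
    convert (M.coe_degree v).trans (Subgraph.degree_eq_one_iff_existsUnique_adj.2 (hM v.2))
  · rw [← Finset.card_eq_sum_ones, Finset.card_univ, ← Nat.card_eq_fintype_card,
      Nat.card_coe_set_eq]

lemma ncard_oddComponents_eq_of_iso (φ : G ≃g H) :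
    G.oddComponents.ncard = H.oddComponents.ncard := by
  have h (C : G.ConnectedComponent) : (φ.connectedComponentEquiv C).supp.ncard = C.supp.ncard :=
    (Set.ncard_congr' (C.isoEquivSupp φ)).symm
  refine Set.ncard_congr' (φ.connectedComponentEquiv.subtypeEquiv fun C => ?_)
  rw [Set.mem_ofPred_eq, Set.mem_ofPred_eq, h]

lemma isTutteViolator_iff {s : Set V} :
    G.IsTutteViolator s ↔ s.ncard < (G.induce sᶜ).oddComponents.ncard := by
  let φ : ((⊤ : G.Subgraph).deleteVerts s).coe ≃g G.induce sᶜ :=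
    { toEquiv := Equiv.setCongr (by simp [Set.compl_eq_univ_sdiff])
      map_rel_iff' := by
        rintro ⟨x, hx⟩ ⟨y, hy⟩
        have hx : x ∉ s := hx.2
        have hy : y ∉ s := hy.2
        simp [hx, hy] }
  rw [IsTutteViolator, ncard_oddComponents_eq_of_iso φ]

lemma ncard_add_two_le_of_isTutteViolator [Finite V] {s : Set V} (hs : G.IsTutteViolator s)
    (hV : Even (Nat.card V)) : s.ncard + 2 ≤ (G.induce sᶜ).oddComponents.ncard := by
  have hlt := isTutteViolator_iff.1 hs
  have hodd := odd_ncard_oddComponents (G.induce sᶜ)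
  rw [Nat.card_coe_set_eq] at hodd
  have hcard := Set.ncard_add_ncard_compl s
  grind

/-- The join of two graphs: their disjoint union together with all edges between them. -/
def join (G : SimpleGraph V) (H : SimpleGraph W) : SimpleGraph (V ⊕ W) :=
  (G ⊕g H) ⊔ completeBipartiteGraph V W

lemma join_adj_inl {u v : V} : (join G H).Adj (.inl u) (.inl v) ↔ G.Adj u v := by
  simp [join]

lemma exists_isMatching_of_isPerfectMatching_join [Finite V] [Finite W] {M : (join G H).Subgraph}
    (hM : M.IsPerfectMatching) :
    ∃ M' : G.Subgraph, M'.IsMatching ∧ Nat.card V ≤ 2 * M'.edgeSet.ncard + Nat.card W := by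
  let M' : G.Subgraph :=
    { verts := {v | ∃ w, M.Adj (.inl v) (.inl w)}
      Adj := fun v w => M.Adj (.inl v) (.inl w)
      adj_sub := fun h => join_adj_inl.1 h.adj_sub
      edge_vert := fun h => ⟨_, h⟩
      symm := ⟨fun _ _ h => h.symm⟩ }
  have hM' : M'.IsMatching := fun v ⟨w, hw⟩ =>
    ⟨w, hw, fun _ hx => Sum.inl_injective (hM.1.eq_of_adj_left hx hw)⟩
  have hpartner (v : (M'.vertsᶜ : Set V)) : ∃ w : W, M.Adj (.inl v) (.inr w) := by
    obtain ⟨w | w, hw, -⟩ := hM.1 (hM.2 (.inl v))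
    · exact absurd ⟨w, hw⟩ v.2
    · exact ⟨w, hw⟩
  choose f hf using hpartner
  have hinj : f.Injective := fun u v huv =>
    Subtype.ext (Sum.inl_injective (hM.1.eq_of_adj_right (hf u) (huv ▸ hf v)))
  have hunmatched := Nat.card_le_card_of_injective f hinj
  rw [Nat.card_coe_set_eq] at hunmatched
  have := Set.ncard_add_ncard_compl M'.verts
  exact ⟨M', hM', by rw [two_mul_ncard_edgeSet_of_isMatching hM']; omega⟩

lemma preconnected_induce_join_top {s : Set (V ⊕ W)} {w : W} (hw : .inr w ∈ s) :
    ((join G (⊤ : SimpleGraph W)).induce s).Preconnected := by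
  have h (x : s) : ((join G (⊤ : SimpleGraph W)).induce s).Reachable x ⟨.inr w, hw⟩ := by
    by_cases hx : x = ⟨.inr w, hw⟩
    · exact hx ▸ .rfl
    · refine Adj.reachable ?_
      obtain ⟨v | w, hx⟩ := x <;> simp_all [join]
  exact fun x y => (h x).trans (h y).symm

lemma range_inr_subset_of_isTutteViolator_join_top [Finite V] [Finite W] {s : Set (V ⊕ W)}
    (hs : (join G (⊤ : SimpleGraph W)).IsTutteViolator s) (hVW : Even (Nat.card (V ⊕ W))) :
    Set.range Sum.inr ⊆ s := by
  rintro _ ⟨w, rfl⟩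
  by_contra hw
  have := (preconnected_induce_join_top (G := G) (s := sᶜ) hw).subsingleton_connectedComponent
  have := Set.ncard_le_one_of_subsingleton ((join G (⊤ : SimpleGraph W)).induce sᶜ).oddComponents
  have := ncard_add_two_le_of_isTutteViolator hs hVW
  omega

lemma exists_ncard_add_le_ncard_oddComponents [Finite V] [Finite W] {s : Set (V ⊕ W)}
    (hs : (join G (⊤ : SimpleGraph W)).IsTutteViolator s) (hVW : Even (Nat.card (V ⊕ W))) :
    ∃ A : Set V, A.ncard + Nat.card W + 2 ≤ (G.induce Aᶜ).oddComponents.ncard := by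
  have hW := range_inr_subset_of_isTutteViolator_join_top hs hVW
  let φ : G.induce (Sum.inl ⁻¹' s)ᶜ ≃g (join G (⊤ : SimpleGraph W)).induce sᶜ :=
    { toEquiv := Equiv.ofBijective (fun v => ⟨.inl v, v.2⟩)
        ⟨fun u v h => Subtype.ext (Sum.inl_injective (congrArg Subtype.val h)), by
          rintro ⟨v | w, hx⟩
          · exact ⟨⟨v, hx⟩, rfl⟩
          · exact absurd (hW ⟨w, rfl⟩) hx⟩
      map_rel_iff' := join_adj_inl }
  have hcard := Nat.card_congr φ.toEquiv
  rw [Nat.card_coe_set_eq, Nat.card_coe_set_eq] at hcard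
  have hA := Set.ncard_add_ncard_compl (Sum.inl ⁻¹' s : Set V)
  have hs' := Set.ncard_add_ncard_compl s
  rw [Nat.card_sum] at hs'
  have := ncard_add_two_le_of_isTutteViolator hs hVW
  exact ⟨Sum.inl ⁻¹' s, by rw [ncard_oddComponents_eq_of_iso φ]; omega⟩

-- The Tutte–Berge formula. If a maximum matching of `G` leaves `d + 2` vertices unmatched, then the
-- join of `G` with `K_d` has no perfect matching, and Tutte's theorem applies to that join.
theorem exists_isMatching_le_ncard_oddComponents [Finite V] (G : SimpleGraph V) :
    ∃ M : G.Subgraph, M.IsMatching ∧ ∃ A : Set V,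
      Nat.card V + A.ncard ≤ 2 * M.edgeSet.ncard + (G.induce Aᶜ).oddComponents.ncard := by
  obtain ⟨M, hM, hmax⟩ := Set.exists_max_image {M : G.Subgraph | M.IsMatching}
    (fun M => M.edgeSet.ncard) (Set.toFinite _) ⟨⊥, fun _ h => h.elim⟩
  refine ⟨M, hM, ?_⟩
  have hle := M.verts.ncard_le_card
  rw [← two_mul_ncard_edgeSet_of_isMatching hM] at hle
  by_cases hn : Nat.card V ≤ 2 * M.edgeSet.ncard + 1
  · have hodd := odd_ncard_oddComponents (G.induce (∅ᶜ : Set V))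
    rw [Nat.card_coe_set_eq, Set.compl_empty, Set.ncard_univ, Nat.odd_iff, Nat.odd_iff] at hodd
    exact ⟨∅, by rw [Set.ncard_empty, Set.compl_empty]; omega⟩
  · let d := Nat.card V - 2 * M.edgeSet.ncard - 2
    have hno : ¬ ∃ N : (join G (⊤ : SimpleGraph (Fin d))).Subgraph, N.IsPerfectMatching := by
      rintro ⟨N, hN⟩
      obtain ⟨M', hM', hn'⟩ := exists_isMatching_of_isPerfectMatching_join hN
      have := hmax M' hM'
      grind [Nat.card_fin]
    have hVd : Even (Nat.card (V ⊕ Fin d)) := by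
      rw [Nat.card_sum, Nat.card_fin]
      grind
    rw [tutte] at hno
    push Not at hno
    obtain ⟨s, hs⟩ := hno
    obtain ⟨A, hA⟩ := exists_ncard_add_le_ncard_oddComponents hs hVd
    exact ⟨A, by grind [Nat.card_fin]⟩

lemma three_le_ncard_supp_add [Finite V] {C : G.ConnectedComponent} (hC : C ∈ G.oddComponents) :
    3 ≤ C.supp.ncard + 2 * (C.supp ∩ G.supportᶜ).ncard := by
  by_cases hone : C.supp.ncard = 1
  · obtain ⟨x, hx⟩ := Set.ncard_eq_one.1 hone
    have hisolated : x ∉ G.support := by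
      rintro ⟨y, hxy⟩
      have hy : y ∈ C.supp := C.mem_supp_of_adj_mem_supp (by simp [hx]) hxy
      exact hxy.ne' (by simpa [hx] using hy)
    simp [hx, hisolated]
  · have : Odd C.supp.ncard := hC
    grind

lemma sum_ncard_supp_inter [Finite V] [Fintype G.ConnectedComponent] (s : Set V) :
    ∑ C : G.ConnectedComponent, (C.supp ∩ s).ncard = s.ncard := by
  rw [← finsum_eq_sum_of_fintype, ← Set.ncard_iUnion_of_finite fun _ => Set.toFinite _,
    ← Set.iUnion_inter, iUnion_connectedComponentSupp, Set.univ_inter]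
  exact fun C D hCD => (G.pairwise_disjoint_supp_connectedComponent hCD).mono
    Set.inter_subset_left Set.inter_subset_left

lemma three_mul_ncard_oddComponents_le [Finite V] (G : SimpleGraph V) :
    3 * G.oddComponents.ncard ≤ Nat.card V + 2 * G.supportᶜ.ncard := by
  classical
  have := Fintype.ofFinite G.ConnectedComponent
  calc 3 * G.oddComponents.ncard = ∑ C ∈ G.oddComponents.toFinset, 3 := by
        rw [Finset.sum_const, smul_eq_mul, ← Set.ncard_eq_toFinset_card', mul_comm]
    _ ≤ ∑ C ∈ G.oddComponents.toFinset,
          (C.supp.ncard + 2 * (C.supp ∩ G.supportᶜ).ncard) :=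
        Finset.sum_le_sum fun C hC => three_le_ncard_supp_add (Set.mem_toFinset.1 hC)
    _ ≤ ∑ C : G.ConnectedComponent, (C.supp.ncard + 2 * (C.supp ∩ G.supportᶜ).ncard) :=
        Finset.sum_le_sum_of_subset (Finset.subset_univ _)
    _ = Nat.card V + 2 * G.supportᶜ.ncard := by
        rw [Finset.sum_add_distrib, ← Finset.mul_sum, sum_ncard_supp_inter,
          ← Set.ncard_univ, ← sum_ncard_supp_inter (G := G) Set.univ]
        simp only [Set.inter_univ]

end TutteBerge

section Matching

variable {V : Type*} {G : SimpleGraph V}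

lemma ncard_edgeSet_le_induce_compl_add_induce_between [Finite V] {A B : Set V}
    (hB : ∀ ⦃x y⦄, x ∈ B → G.Adj x y → y ∈ A) :
    G.edgeSet.ncard ≤
      (G.induce Bᶜ).edgeSet.ncard + ((G.between A B).induce (A ∪ B)).edgeSet.ncard := by
  have hcover : G.edgeSet ⊆ (G.edgeSet ∩ Bᶜ.sym2) ∪ ((G.between A B).edgeSet ∩ (A ∪ B).sym2) := by
    intro e
    induction e with
    | _ x y =>
      intro hxy
      by_cases hx : x ∈ B
      · have hy := hB hx hxy
        exact .inr ⟨between_adj.2 ⟨hxy, .inr ⟨hx, hy⟩⟩, .inr hx, .inl hy⟩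
      · by_cases hy : y ∈ B
        · have hx := hB hy hxy.symm
          exact .inr ⟨between_adj.2 ⟨hxy, .inl ⟨hx, hy⟩⟩, .inl hx, .inr hy⟩
        · exact .inl ⟨hxy, hx, hy⟩
  simpa only [ncard_edgeSet_induce] using
    (Set.ncard_le_ncard hcover).trans (Set.ncard_union_le _ _)

lemma ncard_edgeSet_add_ncard_le_of_isPlanar [Finite V] (hG : G.IsPlanar) {A B : Set V}
    (hAB : Disjoint A B) (hB : ∀ ⦃x y⦄, x ∈ B → G.Adj x y → y ∈ A) :
    G.edgeSet.ncard + B.ncard ≤ 3 * Nat.card V + 2 * A.ncard := by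
  have hsplit := ncard_edgeSet_le_induce_compl_add_induce_between hB
  have hcompl : (G.induce Bᶜ).edgeSet.ncard ≤ 3 * Nat.card (Bᶜ : Set V) :=
    ncard_edgeSet_le_three_mul_of_not_hasMinor_completeGraph
      fun h => hG.1 (hasMinor_trans (hasMinor_induce _) h)
  have hbetween : ((G.between A B).induce (A ∪ B)).edgeSet.ncard ≤ 2 * Nat.card (A ∪ B : Set V) :=
    ncard_edgeSet_le_two_mul_of_isBipartite
      ((between_isBipartite hAB).of_hom (Embedding.induce _).toHom)
      fun h => hG.2 <| hasMinor_trans (hasMinor_of_le between_le) <|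
        hasMinor_trans (hasMinor_induce _) h
  rw [Nat.card_coe_set_eq] at hcompl hbetween
  rw [Set.ncard_union_eq hAB] at hbetween
  have := Set.ncard_add_ncard_compl B
  omega

theorem exists_isMatching_ncard_edgeSet_le_of_isPlanar [Finite V] (hG : G.IsPlanar) :
    ∃ M : G.Subgraph, M.IsMatching ∧
      G.edgeSet.ncard ≤ 3 * M.edgeSet.ncard + 2 * Nat.card V := by
  obtain ⟨M, hM, A, hA⟩ := exists_isMatching_le_ncard_oddComponents G
  let B : Set V := Subtype.val '' (G.induce Aᶜ).supportᶜ
  have hAB : Disjoint A B := by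
    refine Set.disjoint_right.2 ?_
    rintro _ ⟨x, -, rfl⟩
    exact x.2
  have hB ⦃x y : V⦄ (hx : x ∈ B) (hxy : G.Adj x y) : y ∈ A := by
    obtain ⟨x, hx, rfl⟩ := hx
    by_contra hy
    exact hx ⟨⟨y, hy⟩, hxy⟩
  have hedges := ncard_edgeSet_add_ncard_le_of_isPlanar hG hAB hB
  have hodd : 3 * (G.induce Aᶜ).oddComponents.ncard ≤ Aᶜ.ncard + 2 * B.ncard := by
    rw [Set.ncard_image_of_injective _ Subtype.val_injective, ← Nat.card_coe_set_eq]
    exact three_mul_ncard_oddComponents_le _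
  have := Set.ncard_add_ncard_compl A
  exact ⟨M, hM, by omega⟩

end Matching

end PlanarGraph

/-- Every planar graph with `n` vertices and `m` edges contains a matching of
size at least `(m − 2n)/3`. -/
theorem stmt_1 {V : Type*} [Fintype V] [DecidableEq V]
    (G : SimpleGraph V) [DecidableRel G.Adj] (hG : G.IsPlanar) :
    ∃ M : G.Subgraph, M.IsMatching ∧
      ((G.edgeFinset.card : ℝ) - 2 * (Fintype.card V : ℝ)) / 3 ≤
        (M.edgeSet.ncard : ℝ) := by
  obtain ⟨M, hM, hcard⟩ := PlanarGraph.exists_isMatching_ncard_edgeSet_le_of_isPlanar hG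
  rw [PlanarGraph.ncard_edgeSet_eq_card_edgeFinset, Nat.card_eq_fintype_card] at hcard
  have hcard : (G.edgeFinset.card : ℝ) ≤ 3 * M.edgeSet.ncard + 2 * Fintype.card V := by
    exact_mod_cast hcard
  exact ⟨M, hM, by linarith⟩
end

section
/- Every maximal outerplanar graph with at least 2 vertices can be edge-partitioned into three star forests F_1, F_2, F_3 such that every vertex is the center of a star in at most one of the forests. -/
open SimpleGraph

/-- A graph is outerplanar iff it has neither `K₄` nor `K₂,₃` as a minor. -/
def SimpleGraph.IsOuterplanar {V : Type*} (G : SimpleGraph V) : Prop :=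
  ¬ G.HasMinor (completeGraph (Fin 4)) ∧
  ¬ G.HasMinor (completeBipartiteGraph (Fin 2) (Fin 3))

/-- A maximal outerplanar graph: outerplanar, and adding any missing edge
destroys outerplanarity. -/
def SimpleGraph.IsMaximalOuterplanar {V : Type*} (G : SimpleGraph V) : Prop :=
  G.IsOuterplanar ∧
  ∀ u v : V, u ≠ v → ¬ G.Adj u v →
    ¬ (G ⊔ SimpleGraph.fromEdgeSet {s(u, v)}).IsOuterplanar

/-- `F` is a star forest with center set `C`. -/
def IsStarForestWithCenters {V : Type*} (F : Set (Sym2 V)) (C : Set V) : Prop :=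
  (∀ e ∈ F, ∃ u v, e = s(u, v) ∧ u ∈ C ∧ v ∉ C) ∧
  (∀ v ∉ C, {e | e ∈ F ∧ v ∈ e}.Subsingleton)

/-! A finite graph without `K₄` minor that has an edge has a non-isolated vertex `v` of degree at
most two: otherwise, take a longest path and a chord from its first vertex `a` to an inner vertex
`y` whose predecessor on the path is `x`, with the segment from `a` to `x` as short as possible.
Reversing that segment gives another longest path, starting at `x`, so both `a` and `x` have
neighbors beyond `y`; then the segment up to the predecessor of `x`, the vertices `x` and `y`, and
the rest of the path are the branch sets of a `K₄` minor.

Contracting `v` into a neighbor keeps the graph `K₄`-minor-free and makes the (at most two)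
neighbors of `v` adjacent. By induction the contracted graph has a proper 3-coloring and an
orientation in which the in-neighbors of each vertex have distinct colors. Both extend to `v`: give
it a color missing from its neighbors, which have distinct colors, and orient its edges towards it.
The edges leaving the vertices of one color form a star forest. -/

section Minor

variable {U V W : Type*} {G : SimpleGraph V}

theorem hasMinor_completeGraph_of_forall_lt [LinearOrder W] (f : W → Set V)
    (hconn : ∀ i, (G.induce (f i)).Connected)
    (hdisj : ∀ i j, i < j → Disjoint (f i) (f j))
    (hadj : ∀ i j, i < j → ∃ x ∈ f i, ∃ y ∈ f j, G.Adj x y) :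
    G.HasMinor (completeGraph W) := by
  refine ⟨f, fun i => Set.nonempty_coe_sort.1 (hconn i).nonempty, hconn, fun i j hij => ?_,
    fun i j hij => ?_⟩
  · rcases hij.lt_or_gt with h | h
    exacts [hdisj i j h, (hdisj j i h).symm]
  · rcases hij.lt_or_gt with h | h
    · exact hadj i j h
    · obtain ⟨x, hx, y, hy, hxy⟩ := hadj j i h
      exact ⟨y, hy, x, hx, hxy.symm⟩

theorem connected_induce_of_isChain {l : List V} (hl : l.IsChain G.Adj) (hne : l ≠ []) :
    (G.induce {v | v ∈ l}).Connected := by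
  induction l with
  | nil => exact absurd rfl hne
  | cons a t ih =>
    cases t with
    | nil =>
      have hsingle : {v | v ∈ [a]} = {a} := by ext; simp
      rw [hsingle]
      exact Connected.of_subsingleton
    | cons b t =>
      obtain ⟨hab, ht⟩ := List.isChain_cons_cons.1 hl
      have hunion : {v | v ∈ a :: b :: t} = {a, b} ∪ {v | v ∈ b :: t} := by
        ext
        simp only [Set.mem_ofPred_eq, Set.mem_union, Set.mem_insert_iff, Set.mem_singleton_iff,
          List.mem_cons]
        tauto
      rw [hunion]
      exact induce_union_connected (induce_pair_connected_of_adj hab).preconnected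
        (ih ht (List.cons_ne_nil b t)).preconnected ⟨b, by simp⟩

theorem hasMinor_completeGraph_four_of_isChain {p s : List V} {x y : V}
    (hchain : (p ++ x :: y :: s).IsChain G.Adj) (hnodup : (p ++ x :: y :: s).Nodup)
    (hpy : ∃ v ∈ p, G.Adj v y) (hps : ∃ v ∈ p, ∃ w ∈ s, G.Adj v w) (hxs : ∃ w ∈ s, G.Adj x w) :
    G.HasMinor (completeGraph (Fin 4)) := by
  have hp : p ≠ [] := by rintro rfl; simp at hpy
  have hs : s ≠ [] := by rintro rfl; simp at hxs
  obtain ⟨hpchain, hxchain, hpjoin⟩ := List.isChain_append.1 hchain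
  obtain ⟨hxy, hychain⟩ := List.isChain_cons_cons.1 hxchain
  have hpx : ∃ v ∈ p, G.Adj v x :=
    ⟨p.getLast hp, p.getLast_mem hp, hpjoin _ (p.getLast_mem_getLast? hp) x rfl⟩
  have hys : ∃ w ∈ s, G.Adj y w :=
    ⟨s.head hs, s.head_mem hs, List.isChain_cons.1 hychain |>.1 _ (s.head_mem_head? hs)⟩
  obtain ⟨-, hxnodup, hdisj⟩ := List.nodup_append'.1 hnodup
  obtain ⟨hxys, hynodup⟩ := List.nodup_cons.1 hxnodup
  have hxp : x ∉ p := fun h => hdisj h List.mem_cons_self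
  have hyp : y ∉ p := fun h => hdisj h (.tail x List.mem_cons_self)
  have hps_disj : Disjoint {v | v ∈ p} {v | v ∈ s} :=
    Set.disjoint_left.2 fun _ hvp hvs => hdisj hvp (.tail x (.tail y hvs))
  refine hasMinor_completeGraph_of_forall_lt ![{v | v ∈ p}, {x}, {y}, {v | v ∈ s}] ?_ ?_ ?_
  · simpa [Fin.forall_fin_succ, connected_induce_of_isChain hpchain hp] using
      connected_induce_of_isChain hychain.tail hs
  · have hyx : y ≠ x ∧ x ∉ s := by simpa [eq_comm] using hxys
    simpa [Fin.forall_fin_succ, hps_disj, hxp, hyp] using ⟨hyx, (List.nodup_cons.1 hynodup).1⟩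
  · simpa [Fin.forall_fin_succ] using ⟨⟨hpx, hpy, hps⟩, ⟨hxy, hxs⟩, hys⟩

theorem preconnected_induce_preimage_of_map {φ : V → W}
    (hφ : ∀ w, (G.induce (φ ⁻¹' {w})).Preconnected) {S : Set W}
    (hS : ((G.map φ).induce S).Preconnected) : (G.induce (φ ⁻¹' S)).Preconnected := by
  have reachable_of_eq (x y : φ ⁻¹' S) (hxy : φ x = φ y) :
      (G.induce (φ ⁻¹' S)).Reachable x y := by
    have hsub : φ ⁻¹' {φ y} ⊆ φ ⁻¹' S := Set.preimage_mono (Set.singleton_subset_iff.2 y.2)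
    exact (hφ (φ y) ⟨x, hxy⟩ ⟨y, rfl⟩).map (G.induceHomOfLE hsub).toHom
  have reachable_of_walk {a b : S} (p : ((G.map φ).induce S).Walk a b) :
      ∀ x y : φ ⁻¹' S, φ x = a → φ y = b → (G.induce (φ ⁻¹' S)).Reachable x y := by
    induction p with
    | nil => exact fun x y hx hy => reachable_of_eq x y (hx.trans hy.symm)
    | @cons a a' b haa' _ ih =>
      obtain ⟨-, x', y', hadj, hx', hy'⟩ := haa'
      intro x y hx hy
      have hx'S : φ x' ∈ S := hx' ▸ a.2
      have hy'S : φ y' ∈ S := hy' ▸ a'.2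
      have hstep : (G.induce (φ ⁻¹' S)).Adj ⟨x', hx'S⟩ ⟨y', hy'S⟩ := hadj
      exact (reachable_of_eq x ⟨x', hx'S⟩ (hx.trans hx'.symm)).trans
        (hstep.reachable.trans (ih ⟨y', hy'S⟩ y hy' hy))
  intro x y
  obtain ⟨p⟩ := hS ⟨φ x, x.2⟩ ⟨φ y, y.2⟩
  exact reachable_of_walk p x y rfl rfl

theorem hasMinor_of_hasMinor_map {H : SimpleGraph U} {φ : V → W}
    (hφ : ∀ w, (G.induce (φ ⁻¹' {w})).Preconnected) (hH : ∀ a, ∃ b, H.Adj a b)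
    (h : (G.map φ).HasMinor H) : G.HasMinor H := by
  obtain ⟨f, -, hconn, hdisj, hadj⟩ := h
  have hadj' (a b : U) (hab : H.Adj a b) : ∃ x ∈ φ ⁻¹' f a, ∃ y ∈ φ ⁻¹' f b, G.Adj x y := by
    obtain ⟨_, hx, _, hy, -, x, y, hxy, rfl, rfl⟩ := hadj a b hab
    exact ⟨x, hx, y, hy, hxy⟩
  have hne (a : U) : (φ ⁻¹' f a).Nonempty := by
    obtain ⟨b, hab⟩ := hH a
    obtain ⟨x, hx, -⟩ := hadj' a b hab
    exact ⟨x, hx⟩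
  exact ⟨fun a => φ ⁻¹' f a, hne,
    fun a => (connected_iff _).2
      ⟨preconnected_induce_preimage_of_map hφ (hconn a).preconnected, (hne a).to_subtype⟩,
    fun a b hab => (hdisj hab).preimage φ, hadj'⟩

end Minor

section EdgeContraction

variable {V : Type*} [DecidableEq V] {G : SimpleGraph V} {u v : V}

theorem preconnected_induce_preimage_update (h : G.Adj u v) (w : V) :
    (G.induce (Function.update id v u ⁻¹' {w})).Preconnected := by
  rintro ⟨x, hx⟩ ⟨y, hy⟩
  have hcases : x = y ∨ G.Adj x y := by
    rw [Set.mem_preimage, Set.mem_singleton_iff, Function.update_apply] at hx hy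
    have := h.symm
    grind
  rcases hcases with rfl | hxy
  · exact Reachable.rfl
  · exact Adj.reachable hxy

theorem not_adj_map_update (h : G.Adj u v) (x : V) :
    ¬ (G.map (Function.update id v u)).Adj x v := by
  rintro ⟨-, -, y, -, -, hy⟩
  rw [Function.update_apply] at hy
  have := h.ne
  grind

theorem adj_map_update_of_adj {x y : V} (hx : x ≠ v) (hy : y ≠ v) (hxy : G.Adj x y) :
    (G.map (Function.update id v u)).Adj x y :=
  ⟨hxy.ne, x, y, hxy, by simp [hx], by simp [hy]⟩

theorem adj_map_update_of_neighbor {y : V} (hvy : G.Adj v y) (huy : u ≠ y) :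
    (G.map (Function.update id v u)).Adj u y :=
  ⟨huy, v, y, hvy, by simp, by simp [hvy.ne']⟩

theorem support_map_update_ssubset (h : G.Adj u v) :
    (G.map (Function.update id v u)).support ⊂ G.support := by
  refine (Set.ssubset_iff_of_subset ?_).2
    ⟨v, ⟨u, h.symm⟩, fun ⟨x, hx⟩ => not_adj_map_update h x hx.symm⟩
  rintro _ ⟨_, -, x, y, hxy, rfl, -⟩
  by_cases hxv : x = v
  · exact ⟨v, by simpa [hxv] using h⟩
  · exact ⟨y, by simpa [hxv] using hxy⟩

end EdgeContraction

section LongestPath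

variable {V : Type*} {G : SimpleGraph V} {a b x y z : V} {l m s t : List V}

/-- `l` lists the vertices of a path of `G`, in order, and no path of `G` has more vertices. -/
def IsLongestPath (G : SimpleGraph V) (l : List V) : Prop :=
  MaximalFor (fun l : List V => l.IsChain G.Adj ∧ l.Nodup) List.length l

theorem exists_isLongestPath [Finite V] (G : SimpleGraph V) : ∃ l, IsLongestPath G l := by
  have := Fintype.ofFinite V
  have hfin : {l : List V | l.IsChain G.Adj ∧ l.Nodup}.Finite :=
    (List.finite_length_le V (Fintype.card V)).subset fun _ hl => hl.2.length_le_card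
  exact hfin.exists_maximalFor List.length _ ⟨[], by simp⟩

theorem IsLongestPath.of_length_eq (hl : IsLongestPath G l) (hchain : t.IsChain G.Adj)
    (hnodup : t.Nodup) (hlen : t.length = l.length) : IsLongestPath G t :=
  ⟨⟨hchain, hnodup⟩, fun _ hp hle => hlen ▸ hl.2 hp (hlen ▸ hle)⟩

theorem IsLongestPath.two_le_length (hl : IsLongestPath G l) (hab : G.Adj a b) :
    2 ≤ l.length := by
  by_contra! hlt
  exact hlt.not_ge (hl.2 (j := [a, b]) (by simp [hab, hab.ne]) hlt.le)

theorem IsLongestPath.mem_of_adj_head (hl : IsLongestPath G (a :: t)) (haz : G.Adj a z) :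
    z ∈ t := by
  by_contra hz
  have hpath : (z :: a :: t).IsChain G.Adj ∧ (z :: a :: t).Nodup :=
    ⟨List.isChain_cons_cons.2 ⟨haz.symm, hl.1.1⟩,
      List.nodup_cons.2 ⟨by simp [haz.ne', hz], hl.1.2⟩⟩
  exact Nat.not_succ_le_self _ (hl.2 hpath (Nat.le_succ _))

/-- `a :: (m ++ x :: y :: s)` is a longest path whose first vertex `a` is adjacent to its inner
vertex `y`. Reversing the segment from `a` to `x` then gives a longest path starting at `x`. -/
structure IsFork (G : SimpleGraph V) (a : V) (m : List V) (x y : V) (s : List V) : Prop where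
  isLongestPath : IsLongestPath G (a :: (m ++ x :: y :: s))
  adj : G.Adj a y

theorem IsFork.reverse (h : IsFork G a m x y s) : IsFork G x m.reverse a y s := by
  obtain ⟨hl, hay⟩ := h
  obtain ⟨hax, hxy, hys⟩ := List.isChain_cons_append_cons_cons.1 hl.1.1
  have hxa : (x :: (m.reverse ++ [a])).IsChain G.Adj := by
    simpa using List.isChain_reverse.2 (hax.imp fun _ _ => Adj.symm)
  have hperm : (x :: (m.reverse ++ a :: y :: s)).Perm (a :: (m ++ x :: y :: s)) := by
    simpa using (a :: (m ++ [x])).reverse_perm.append_right (y :: s)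
  exact ⟨hl.of_length_eq (List.isChain_cons_append_cons_cons.2 ⟨hxa, hay, hys⟩)
    (hperm.nodup_iff.2 hl.1.2) hperm.length_eq, hxy⟩

theorem IsLongestPath.exists_isFork (hl : IsLongestPath G (a :: t)) (haz : G.Adj a z)
    (hz : z ∉ t.head?) : ∃ m x s, t = m ++ x :: z :: s ∧ IsFork G a m x z s := by
  obtain ⟨p, s, rfl⟩ := List.append_of_mem (hl.mem_of_adj_head haz)
  obtain rfl | ⟨m, x, rfl⟩ := p.eq_nil_or_concat
  · simp at hz
  · exact ⟨m, x, s, by simp, ⟨by simpa using hl, haz⟩⟩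

theorem IsFork.exists_adj_mem_or_exists_shorter (h : IsFork G a m x y s)
    (hdeg : ∀ v u w, G.Adj v u → ∃ z, G.Adj v z ∧ z ≠ u ∧ z ≠ w) :
    (∃ z ∈ s, G.Adj a z) ∨ ∃ m' x' y' s', IsFork G a m' x' y' s' ∧ m'.length < m.length := by
  obtain ⟨z, haz, hzy, hz⟩ := hdeg a y (m.head?.getD x) h.adj
  obtain ⟨m', x', s', heq, hfork⟩ :=
    h.isLongestPath.exists_isFork haz (by simpa using hz.symm)
  rcases lt_or_ge m'.length m.length with hlt | hle
  · exact .inr ⟨m', x', z, s', hfork, hlt⟩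
  · refine .inl ⟨z, ?_, haz⟩
    obtain ⟨r, rfl⟩ : m <+: m' :=
      List.prefix_of_prefix_length_le ⟨_, rfl⟩ ⟨_, heq.symm⟩ hle
    rw [List.append_assoc, List.append_cancel_left_eq] at heq
    match r with
    | [] => simp_all
    | [_] => simp_all
    | _ :: _ :: r => simp_all

theorem IsFork.hasMinor_completeGraph_four (h : IsFork G a m x y s)
    (ha : ∃ z ∈ s, G.Adj a z) (hx : ∃ z ∈ s, G.Adj x z) :
    G.HasMinor (completeGraph (Fin 4)) := by
  obtain ⟨z, hzs, haz⟩ := ha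
  exact hasMinor_completeGraph_four_of_isChain (p := a :: m) h.isLongestPath.1.1
    h.isLongestPath.1.2 ⟨a, List.mem_cons_self, h.adj⟩ ⟨a, List.mem_cons_self, z, hzs, haz⟩ hx

theorem hasMinor_completeGraph_four_of_isFork
    (hdeg : ∀ v u w, G.Adj v u → ∃ z, G.Adj v z ∧ z ≠ u ∧ z ≠ w) (h : IsFork G a m x y s) :
    G.HasMinor (completeGraph (Fin 4)) := by
  induction hm : m.length using Nat.strong_induction_on generalizing a m x y s with
  | _ n ih =>
    subst hm
    rcases h.exists_adj_mem_or_exists_shorter hdeg with ha | ⟨m', x', y', s', h', hlt⟩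
    · rcases h.reverse.exists_adj_mem_or_exists_shorter hdeg with hx | ⟨m', x', y', s', h', hlt⟩
      · exact h.hasMinor_completeGraph_four ha hx
      · exact ih _ (by simpa using hlt) h' rfl
    · exact ih _ hlt h' rfl

theorem exists_neighborSet_subset_pair [Finite V]
    (hG : ¬ G.HasMinor (completeGraph (Fin 4))) (hne : G ≠ ⊥) :
    ∃ v u w, G.Adj u v ∧ G.neighborSet v ⊆ {u, w} := by
  by_contra! hcon
  have hdeg (v u w : V) (huv : G.Adj v u) : ∃ z, G.Adj v z ∧ z ≠ u ∧ z ≠ w := by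
    simpa [Set.not_subset] using hcon v u w huv.symm
  obtain ⟨a, b, hab⟩ := ne_bot_iff_exists_adj.1 hne
  obtain ⟨l, hl⟩ := exists_isLongestPath G
  match l, hl, hl.two_le_length hab with
  | c :: d :: t, hl, _ =>
    obtain ⟨z, hcz, hzd, -⟩ := hdeg c d d (List.isChain_cons_cons.1 hl.1.1).1
    obtain ⟨m, x, s, -, hfork⟩ := hl.exists_isFork hcz (by simpa using hzd.symm)
    exact hG (hasMinor_completeGraph_four_of_isFork hdeg hfork)

end LongestPath

section StarOrientation

variable {V α : Type*} {G G' : SimpleGraph V} {c : V → α} {D : V → V → Prop} {v : V}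

/-- `D` orients every edge of `G` in exactly one direction and `c` is a proper coloring of `G` in
which distinct in-neighbors of a vertex have distinct colors. Every vertex is then the center of
the star formed by its outgoing edges, and the stars with centers of one color form a star
forest. -/
structure IsStarOrientation (G : SimpleGraph V) (c : V → α) (D : V → V → Prop) : Prop where
  adj_iff : ∀ ⦃x y⦄, G.Adj x y ↔ D x y ∨ D y x
  asymm : ∀ ⦃x y⦄, D x y → ¬ D y x
  color_ne : ∀ ⦃x y⦄, G.Adj x y → c x ≠ c y
  eq_of_color_eq : ∀ ⦃x y z⦄, D x z → D y z → c x = c y → x = y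

theorem IsStarOrientation.bot (c : V → α) :
    IsStarOrientation (⊥ : SimpleGraph V) c fun _ _ => False := by
  constructor <;> simp

theorem IsStarOrientation.update [DecidableEq V] {k : α} (h : IsStarOrientation G' c D)
    (hv : ∀ x, ¬ G'.Adj x v) (hle : ∀ x y, x ≠ v → y ≠ v → G.Adj x y → G'.Adj x y)
    (hclique : (G.neighborSet v).Pairwise G'.Adj) (hk : ∀ x, G.Adj v x → c x ≠ k) :
    IsStarOrientation G (Function.update c v k)
      fun x y => y = v ∧ G.Adj x v ∨ D x y ∧ G.Adj x y := by
  have hDv {x y : V} (hD : D x y) : x ≠ v ∧ y ≠ v := by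
    have hadj := h.adj_iff.2 (.inl hD)
    exact ⟨fun hx => hv y (hx ▸ hadj.symm), fun hy => hv x (hy ▸ hadj)⟩
  refine ⟨fun x y => ⟨fun hxy => ?_, ?_⟩, ?_, fun x y hxy => ?_, ?_⟩
  · by_cases hx : x = v
    · exact .inr (.inl ⟨hx, hx ▸ hxy.symm⟩)
    by_cases hy : y = v
    · exact .inl (.inl ⟨hy, hy ▸ hxy⟩)
    exact (h.adj_iff.1 (hle x y hx hy hxy)).imp (fun hD => .inr ⟨hD, hxy⟩)
      fun hD => .inr ⟨hD, hxy.symm⟩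
  · rintro ((⟨rfl, hxy⟩ | ⟨-, hxy⟩) | (⟨rfl, hxy⟩ | ⟨-, hxy⟩))
    exacts [hxy, hxy, hxy.symm, hxy.symm]
  · rintro x y (⟨rfl, hxy⟩ | ⟨hD, -⟩) (⟨rfl, -⟩ | ⟨hD', -⟩)
    · exact G.loopless.irrefl _ hxy
    · exact (hDv hD').1 rfl
    · exact (hDv hD).1 rfl
    · exact h.asymm hD hD'
  · by_cases hx : x = v
    · subst hx
      simpa [hxy.ne'] using (hk y hxy).symm
    by_cases hy : y = v
    · subst hy
      simpa [hx] using hk x hxy.symm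
    simpa [hx, hy] using h.color_ne (hle x y hx hy hxy)
  · rintro x y z (⟨rfl, hxz⟩ | ⟨hD, -⟩) (⟨hz, hyz⟩ | ⟨hD', -⟩) hc
    · by_contra hxy
      exact h.color_ne (hclique hxz.symm hyz.symm hxy) (by simpa [hxz.ne, hyz.ne] using hc)
    · exact absurd rfl (hDv hD').2
    · exact absurd hz (hDv hD).2
    · exact h.eq_of_color_eq hD hD' (by simpa [(hDv hD).1, (hDv hD').1] using hc)

theorem exists_isStarOrientation [Finite V] (G : SimpleGraph V)
    (hG : ¬ G.HasMinor (completeGraph (Fin 4))) :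
    ∃ (c : V → Fin 3) (D : V → V → Prop), IsStarOrientation G c D := by
  classical
  induction hn : G.support.ncard using Nat.strong_induction_on generalizing G with
  | _ n ih =>
    obtain rfl | hne := eq_or_ne G ⊥
    · exact ⟨0, _, .bot 0⟩
    obtain ⟨v, u, w, huv, hvuw⟩ := exists_neighborSet_subset_pair hG hne
    have hminor : ¬ (G.map (Function.update id v u)).HasMinor (completeGraph (Fin 4)) :=
      mt (hasMinor_of_hasMinor_map (preconnected_induce_preimage_update huv)
        fun i => (exists_ne i).imp fun _ => Ne.symm) hG
    have hlt := Set.ncard_lt_ncard (support_map_update_ssubset huv)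
    obtain ⟨c, D, h⟩ := ih _ (hn ▸ hlt) _ hminor rfl
    obtain ⟨k, hku, hkw⟩ : ∃ k, c u ≠ k ∧ c w ≠ k := by
      generalize c u = i, c w = j
      decide +revert
    refine ⟨_, _, h.update (k := k) (not_adj_map_update huv)
      (fun _ _ => adj_map_update_of_adj) ?_ ?_⟩
    · intro x hx y hy hxy
      rcases hvuw hx with rfl | rfl <;> rcases hvuw hy with rfl | rfl
      · exact absurd rfl hxy
      · exact adj_map_update_of_neighbor hy hxy
      · exact (adj_map_update_of_neighbor hx hxy.symm).symm
      · exact absurd rfl hxy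
    · intro x hx
      rcases hvuw hx with rfl | rfl
      exacts [hku, hkw]

/-- The forest of color `i` of a star orientation: the edges leaving a vertex of color `i`. -/
def starsOfColor (c : V → α) (D : V → V → Prop) (i : α) : Set (Sym2 V) :=
  {e | ∃ x y, e = s(x, y) ∧ D x y ∧ c x = i}

theorem IsStarOrientation.isStarForestWithCenters (h : IsStarOrientation G c D) (i : α) :
    IsStarForestWithCenters (starsOfColor c D i) {v | c v = i} := by
  refine ⟨?_, ?_⟩
  · rintro _ ⟨x, y, rfl, hD, rfl⟩
    exact ⟨x, y, rfl, rfl, (h.color_ne (h.adj_iff.2 (.inl hD))).symm⟩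
  · have eq_head {v x y : V} (hv : c v ≠ i) (hx : c x = i) (hmem : v ∈ s(x, y)) : v = y :=
      (Sym2.mem_iff.1 hmem).resolve_left fun hvx => hv (hvx ▸ hx)
    rintro v hv _ ⟨⟨x, y, rfl, hD, hx⟩, hvy⟩ _ ⟨⟨x', y', rfl, hD', hx'⟩, hvy'⟩
    obtain rfl := eq_head hv hx hvy
    obtain rfl := eq_head hv hx' hvy'
    rw [h.eq_of_color_eq hD hD' (hx.trans hx'.symm)]

theorem IsStarOrientation.pairwise_disjoint (h : IsStarOrientation G c D) :
    Pairwise fun i j => Disjoint (starsOfColor c D i) (starsOfColor c D j) := by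
  intro i j hij
  rw [Set.disjoint_left]
  rintro _ ⟨x, y, rfl, hD, hi⟩ ⟨x', y', heq, hD', hj⟩
  rcases Sym2.eq_iff.1 heq with ⟨rfl, rfl⟩ | ⟨rfl, rfl⟩
  · exact hij (hi.symm.trans hj)
  · exact h.asymm hD hD'

theorem IsStarOrientation.iUnion_starsOfColor (h : IsStarOrientation G c D) :
    ⋃ i, starsOfColor c D i = G.edgeSet := by
  ext e
  induction e with
  | h x y =>
    simp only [Set.mem_iUnion, starsOfColor, Set.mem_ofPred_eq, mem_edgeSet, h.adj_iff]
    constructor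
    · rintro ⟨i, x', y', heq, hD, -⟩
      rcases Sym2.eq_iff.1 heq with ⟨rfl, rfl⟩ | ⟨rfl, rfl⟩
      exacts [.inl hD, .inr hD]
    · rintro (hD | hD)
      exacts [⟨c x, x, y, rfl, hD, rfl⟩, ⟨c y, y, x, Sym2.eq_swap, hD, rfl⟩]

end StarOrientation

theorem stmt_3_general {V : Type*} [Finite V] (G : SimpleGraph V)
    (hG : ¬ G.HasMinor (completeGraph (Fin 4))) :
    ∃ (F : Fin 3 → Set (Sym2 V)) (C : Fin 3 → Set V),
      (∀ i, IsStarForestWithCenters (F i) (C i)) ∧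
      (Pairwise fun i j => Disjoint (F i) (F j)) ∧
      (F 0 ∪ F 1 ∪ F 2 = G.edgeSet) ∧
      (∀ v : V, {i : Fin 3 | v ∈ C i}.Subsingleton) := by
  obtain ⟨c, D, h⟩ := exists_isStarOrientation G hG
  refine ⟨starsOfColor c D, fun i => {v | c v = i}, h.isStarForestWithCenters,
    h.pairwise_disjoint, ?_, fun v i hi j hj => hi.symm.trans hj⟩
  rw [← h.iUnion_starsOfColor]
  ext e
  simp [Fin.exists_fin_succ, or_assoc]

/-- Every maximal outerplanar graph with at least 2 vertices can be
edge-partitioned into three star forests such that every vertex is the center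
of a star in at most one of the forests. -/
theorem stmt_3 {V : Type*} [Fintype V] [DecidableEq V]
    (G : SimpleGraph V) (hG : G.IsMaximalOuterplanar)
    (hn : 2 ≤ Fintype.card V) :
    ∃ (F : Fin 3 → Set (Sym2 V)) (C : Fin 3 → Set V),
      (∀ i, IsStarForestWithCenters (F i) (C i)) ∧
      (Pairwise fun i j => Disjoint (F i) (F j)) ∧
      (F 0 ∪ F 1 ∪ F 2 = G.edgeSet) ∧
      (∀ v : V, {i : Fin 3 | v ∈ C i}.Subsingleton) :=
  stmt_3_general G hG.1.1
end

section
/- Every bipartite planar graph can be edge-partitioned into four star forests, two of which have all their star centers in the first part of the bipartition and two in the second part. -/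
open SimpleGraph

/-!
Let `e` and `t` be the numbers of edges and triangles of a planar graph on `n ≥ 4` vertices. Then
`8 ≤ 4 * n - 2 * e + t`. In a minimal counterexample no edge lies in two triangles, since deleting
such an edge does not increase the right-hand side; no subgraph on at least three vertices whose
right-hand side is at most 8, such as a triangle or a 4-cycle, separates the graph, since one of the
two sides would be a smaller counterexample; and every edge `xy` lies in at least three triangles
and 4-cycles altogether, for otherwise contracting `xy` gives a smaller counterexample. Removing `x`
and `y` from three of these leaves three pairwise disjoint connected sets, none of which separates
the other two after the removal of `x` and `y`, and this yields a `K₅` or `K₃,₃` minor.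

A bipartite graph has no triangle, so any `n` vertices of a bipartite planar graph span at most
`2 * n` edges. By Hall's theorem each edge can be assigned to one of its ends, its tail, and given
one of two labels so that edges with the same tail have different labels. The edges with a given
label and with tail outside one part form a star forest with centers in that part.
-/

namespace PlanarStarForest

variable {V : Type*} {G G' : SimpleGraph V}

section Minors

variable {V' W : Type*}

/-- `Touches G A B`: an edge of `G` joins a vertex of `A` to a vertex of `B`. This is the relation
required between the branch sets of adjacent vertices of a minor. -/
def Touches (G : SimpleGraph V) (A B : Set V) : Prop :=
  ∃ u ∈ A, ∃ v ∈ B, G.Adj u v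

namespace Touches

variable {A A' B B' : Set V}

theorem symm (h : Touches G A B) : Touches G B A := by
  obtain ⟨u, hu, v, hv, huv⟩ := h
  exact ⟨v, hv, u, hu, huv.symm⟩

theorem mono (hA : A ⊆ A') (hB : B ⊆ B') (h : Touches G A B) : Touches G A' B' := by
  obtain ⟨u, hu, v, hv, huv⟩ := h
  exact ⟨u, hA hu, v, hB hv, huv⟩

end Touches

theorem connected_induce_singleton (v : V) : (G.induce {v}).Connected :=
  Connected.of_subsingleton

theorem connected_induce_union_of_touches {A B : Set V} (hA : (G.induce A).Connected)
    (hB : (G.induce B).Connected) (hAB : Touches G A B) : (G.induce (A ∪ B)).Connected := by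
  obtain ⟨u, hu, v, hv, huv⟩ := hAB
  exact connected_induce_union hA.preconnected hB.preconnected hu hv huv

theorem isPlanar_anti (hle : G' ≤ G) (hG : G.IsPlanar) : G'.IsPlanar := by
  have hasMinor_mono {k : Type} {H : SimpleGraph k} : G'.HasMinor H → G.HasMinor H := by
    rintro ⟨f, hne, hconn, hdisj, hadj⟩
    refine ⟨f, hne, fun w ↦ (hconn w).mono (comap_monotone _ hle), hdisj, fun w₁ w₂ h ↦ ?_⟩
    obtain ⟨u, hu, v, hv, huv⟩ := hadj w₁ w₂ h
    exact ⟨u, hu, v, hv, hle huv⟩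
  exact ⟨mt hasMinor_mono hG.1, mt hasMinor_mono hG.2⟩

theorem preconnected_induce_preimage {π : V → V'} {B : Set V'}
    (hfib : ∀ b, (G.induce (π ⁻¹' {b})).Preconnected)
    (hB : ((G.map π).induce B).Preconnected) : (G.induce (π ⁻¹' B)).Preconnected := by
  have lift (a b : B) (h : ((G.map π).induce B).Reachable a b) : ∀ u v : π ⁻¹' B,
      π u = a → π v = b → (G.induce (π ⁻¹' B)).Reachable u v := by
    have fibre (u v : π ⁻¹' B) (huv : π u = π v) : (G.induce (π ⁻¹' B)).Reachable u v := by
      have hsub : π ⁻¹' {π u} ⊆ π ⁻¹' B := Set.preimage_mono (Set.singleton_subset_iff.2 u.2)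
      exact (hfib (π u) ⟨u, rfl⟩ ⟨v, huv.symm⟩).map (induceHomOfLE G hsub).toHom
    obtain ⟨p⟩ := h
    induction p with
    | nil => exact fun u v hu hv ↦ fibre u v (hu.trans hv.symm)
    | @cons a c b hac _ ih =>
      intro u v hu hv
      obtain ⟨-, u', v', hadj, hu', hv'⟩ := hac
      have hu'B : π u' ∈ B := hu' ▸ a.2
      have hv'B : π v' ∈ B := hv' ▸ c.2
      have step : (G.induce (π ⁻¹' B)).Adj ⟨u', hu'B⟩ ⟨v', hv'B⟩ := hadj
      exact (fibre u ⟨u', hu'B⟩ (hu.trans hu'.symm)).trans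
        (step.reachable.trans (ih ⟨v', hv'B⟩ v hv' hv))
  exact fun u v ↦ lift ⟨π u, u.2⟩ ⟨π v, v.2⟩ (hB _ _) u v rfl rfl

theorem hasMinor_of_hasMinor_map {π : V → V'} {H : SimpleGraph W}
    (hfib : ∀ b, (G.induce (π ⁻¹' {b})).Preconnected) (hH : ∀ w, ∃ w', H.Adj w w')
    (h : (G.map π).HasMinor H) : G.HasMinor H := by
  obtain ⟨f, -, hconn, hdisj, hadj⟩ := h
  have touches (w₁ w₂ : W) (hw : H.Adj w₁ w₂) : Touches G (π ⁻¹' f w₁) (π ⁻¹' f w₂) := by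
    obtain ⟨_, hu, _, hv, -, u, v, huv, rfl, rfl⟩ := hadj w₁ w₂ hw
    exact ⟨u, hu, v, hv, huv⟩
  have nonempty (w : W) : (π ⁻¹' f w).Nonempty := by
    obtain ⟨w', hw⟩ := hH w
    obtain ⟨u, hu, -⟩ := touches w w' hw
    exact ⟨u, hu⟩
  refine ⟨fun w ↦ π ⁻¹' f w, nonempty, fun w ↦ ?_, fun w₁ w₂ hw ↦ (hdisj hw).preimage π, touches⟩
  have := (nonempty w).to_subtype
  exact ⟨preconnected_induce_preimage hfib (hconn w).preconnected⟩

open Classical in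
/-- The contraction of `y` into `x`, as a graph on the same vertex type in which `y` becomes
isolated. It is meant for adjacent `x` and `y`. -/
noncomputable def contract (G : SimpleGraph V) (x y : V) : SimpleGraph V :=
  G.map (Function.update id y x)

theorem isPlanar_contract {x y : V} (hxy : G.Adj x y) (hG : G.IsPlanar) :
    (contract G x y).IsPlanar := by
  classical
  have hfib (b : V) : (G.induce (Function.update id y x ⁻¹' {b})).Preconnected := by
    by_cases hb : b = x
    · have hpair : Function.update id y x ⁻¹' {b} = {x, y} := by
        ext v
        by_cases hv : v = y <;> simp [hv, hb]
      rw [hpair]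
      exact (induce_pair_connected_of_adj hxy).preconnected
    · have hsub : (Function.update id y x ⁻¹' {b}).Subsingleton := by
        intro u hu v hv
        by_cases hu' : u = y <;> by_cases hv' : v = y <;> simp_all
      have := hsub.coe_sort
      exact Preconnected.of_subsingleton
  refine ⟨mt (hasMinor_of_hasMinor_map hfib fun w ↦ ⟨w + 1, by simp⟩) hG.1,
    mt (hasMinor_of_hasMinor_map hfib ?_) hG.2⟩
  rintro (w | w)
  exacts [⟨Sum.inr 0, by simp⟩, ⟨Sum.inl 0, by simp⟩]

theorem hasMinor_completeBipartiteGraph {α β : Type*} {P : α → Set V} {Q : β → Set V}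
    (hP : ∀ i, (G.induce (P i)).Connected) (hQ : ∀ j, (G.induce (Q j)).Connected)
    (hPP : Pairwise (Function.onFun Disjoint P)) (hQQ : Pairwise (Function.onFun Disjoint Q))
    (hPQ : ∀ i j, Disjoint (P i) (Q j)) (ht : ∀ i j, Touches G (P i) (Q j)) :
    G.HasMinor (completeBipartiteGraph α β) := by
  have hconn : ∀ w, (G.induce (Sum.elim P Q w)).Connected := Sum.rec hP hQ
  refine ⟨Sum.elim P Q, fun w ↦ Set.nonempty_coe_sort.1 (hconn w).nonempty, hconn, ?_, ?_⟩
  · rintro (i | i) (j | j) hij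
    · exact hPP fun h ↦ hij (congrArg Sum.inl h)
    · exact hPQ i j
    · exact (hPQ j i).symm
    · exact hQQ fun h ↦ hij (congrArg Sum.inr h)
  · rintro (i | i) (j | j) hij
    · simp at hij
    · exact ht i j
    · exact (ht j i).symm
    · simp at hij

/-- A model of a complete minor: disjoint connected branch sets that pairwise touch. -/
structure IsCliqueModel {ι : Type*} (G : SimpleGraph V) (f : ι → Set V) : Prop where
  connected : ∀ i, (G.induce (f i)).Connected
  disjoint : Pairwise (Function.onFun Disjoint f)
  touches : Pairwise fun i j ↦ Touches G (f i) (f j)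

namespace IsCliqueModel

theorem hasMinor {ι : Type*} {f : ι → Set V} (hf : IsCliqueModel G f) :
    G.HasMinor (completeGraph ι) :=
  ⟨f, fun i ↦ Set.nonempty_coe_sort.1 (hf.connected i).nonempty, hf.connected, hf.disjoint,
    fun _ _ hij ↦ hf.touches hij⟩

theorem cons {n : ℕ} {f : Fin n → Set V} (hf : IsCliqueModel G f) {A : Set V}
    (hA : (G.induce A).Connected) (hdisj : ∀ i, Disjoint A (f i))
    (ht : ∀ i, Touches G A (f i)) : IsCliqueModel G (Fin.cons A f : Fin (n + 1) → Set V) where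
  connected := Fin.cases hA hf.connected
  disjoint i j hij := by
    cases i using Fin.cases <;> cases j using Fin.cases
    · exact absurd rfl hij
    · exact hdisj _
    · exact (hdisj _).symm
    · exact hf.disjoint fun h ↦ hij (congrArg Fin.succ h)
  touches i j hij := by
    cases i using Fin.cases <;> cases j using Fin.cases
    · exact absurd rfl hij
    · exact ht _
    · exact (ht _).symm
    · exact hf.touches fun h ↦ hij (congrArg Fin.succ h)

end IsCliqueModel

end Minors

section Nonplanarity

theorem exists_adj_of_preconnected_induce {U D : Set V} (hU : (G.induce U).Preconnected)
    (hin : (U ∩ D).Nonempty) (hout : (U \ D).Nonempty) :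
    ∃ u ∈ U ∩ D, ∃ v ∈ U \ D, G.Adj u v := by
  obtain ⟨a, haU, haD⟩ := hin
  obtain ⟨b, hbU, hbD⟩ := hout
  obtain ⟨p⟩ := hU ⟨a, haU⟩ ⟨b, hbU⟩
  obtain ⟨d, -, hd, hd'⟩ := p.exists_boundary_dart {v | (v : V) ∈ D} haD hbD
  exact ⟨d.fst, ⟨d.fst.2, hd⟩, d.snd, ⟨d.snd.2, hd'⟩, d.adj⟩

theorem exists_connected_induce_closed {R : Set V} {v : V} (hv : v ∈ R) :
    ∃ H ⊆ R, v ∈ H ∧ (G.induce H).Connected ∧ ∀ u ∈ H, ∀ w ∈ R, G.Adj u w → w ∈ H := by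
  let 𝒦 : Set (Set V) := {K | K ⊆ R ∧ v ∈ K ∧ (G.induce K).Connected}
  have hsingle : {v} ∈ 𝒦 := ⟨Set.singleton_subset_iff.2 hv, rfl, connected_induce_singleton v⟩
  refine ⟨⋃₀ 𝒦, Set.sUnion_subset fun K hK ↦ hK.1, ⟨{v}, hsingle, rfl⟩, ?_, ?_⟩
  · exact induce_sUnion_connected_of_pairwise_not_disjoint ⟨{v}, hsingle⟩
      (fun hK hK' ↦ ⟨v, hK.2.1, hK'.2.1⟩) fun hK ↦ hK.2.2
  · rintro u ⟨K, ⟨hKR, hvK, hK⟩, huK⟩ w hw huw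
    have hKw : (G.induce (K ∪ {w})).Connected :=
      connected_induce_union_of_touches hK (connected_induce_singleton w) ⟨u, huK, w, rfl, huw⟩
    exact ⟨K ∪ {w}, ⟨Set.union_subset hKR (Set.singleton_subset_iff.2 hw), Or.inl hvK, hKw⟩,
      Or.inr rfl⟩

/-- `H` links `A` to `B`: either `A` and `B` already touch and `H` is empty, or `H` is connected and
touches both. Adding a link to a connected set `A` makes it touch `B`. -/
def IsLink (G : SimpleGraph V) (A B H : Set V) : Prop :=
  (H = ∅ ∧ Touches G A B) ∨ ((G.induce H).Connected ∧ Touches G H A ∧ Touches G H B)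

namespace IsLink

variable {A B H : Set V}

theorem connected_induce_union (h : IsLink G A B H) (hA : (G.induce A).Connected) :
    (G.induce (A ∪ H)).Connected := by
  obtain ⟨rfl, -⟩ | ⟨hH, hHA, -⟩ := h
  · rwa [Set.union_empty]
  · exact connected_induce_union_of_touches hA hH hHA.symm

theorem touches_union (h : IsLink G A B H) : Touches G (A ∪ H) B := by
  obtain ⟨-, hAB⟩ | ⟨-, -, hHB⟩ := h
  · exact hAB.mono Set.subset_union_left subset_rfl
  · exact hHB.mono Set.subset_union_right subset_rfl

theorem of_nonempty (h : IsLink G A B H) (hne : H.Nonempty) :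
    (G.induce H).Connected ∧ Touches G H A ∧ Touches G H B :=
  h.resolve_left fun h' ↦ hne.ne_empty h'.1

end IsLink

theorem exists_isLink {A B R : Set V} (hU : (G.induce (A ∪ B ∪ R)).Preconnected)
    (hA : A.Nonempty) (hB : B.Nonempty) (hAB : Disjoint A B) (hBR : Disjoint B R) :
    ∃ H ⊆ R, IsLink G A B H := by
  let attached : Set V := {v | ∃ H ⊆ R, v ∈ H ∧ (G.induce H).Connected ∧ Touches G H A}
  have hBattached : Disjoint B attached := by
    refine hBR.mono_right ?_
    rintro v ⟨H, hHR, hvH, -⟩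
    exact hHR hvH
  obtain ⟨a, ha⟩ := hA
  obtain ⟨b, hb⟩ := hB
  obtain ⟨u, ⟨-, hu⟩, v, ⟨hvU, hv⟩, huv⟩ :=
    exists_adj_of_preconnected_induce (D := A ∪ attached) hU
      ⟨a, Or.inl (Or.inl ha), Or.inl ha⟩
      ⟨b, Or.inl (Or.inr hb), (hAB.symm.union_right hBattached).notMem_of_mem_left hb⟩
  rw [Set.mem_union, not_or] at hv
  obtain ⟨hvA, hvattached⟩ := hv
  obtain (hvA' | hvB) | hvR := hvU
  · exact absurd hvA' hvA
  · obtain huA | ⟨H, hHR, huH, hH, hHA⟩ := hu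
    · exact ⟨∅, Set.empty_subset R, Or.inl ⟨rfl, u, huA, v, hvB, huv⟩⟩
    · exact ⟨H, hHR, Or.inr ⟨hH, hHA, u, huH, v, hvB, huv⟩⟩
  · refine absurd ?_ hvattached
    obtain huA | ⟨H, hHR, huH, hH, hHA⟩ := hu
    · exact ⟨{v}, Set.singleton_subset_iff.2 hvR, rfl, connected_induce_singleton v,
        v, rfl, u, huA, huv.symm⟩
    · exact ⟨H ∪ {v}, Set.union_subset hHR (Set.singleton_subset_iff.2 hvR), Or.inr rfl,
        connected_induce_union_of_touches hH (connected_induce_singleton v) ⟨u, huH, v, rfl, huv⟩,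
        hHA.mono Set.subset_union_left subset_rfl⟩

theorem not_isPlanar_of_theta {x y : V} {H : Set V} {M : Fin 3 → Set V} (hxy : x ≠ y)
    (hH : (G.induce H).Connected) (hM : ∀ i, (G.induce (M i)).Connected)
    (hxH : x ∉ H) (hyH : y ∉ H) (hxM : ∀ i, x ∉ M i) (hyM : ∀ i, y ∉ M i)
    (hHM : ∀ i, Disjoint H (M i)) (hMM : Pairwise (Function.onFun Disjoint M))
    (htx : ∀ i, Touches G {x} (M i)) (hty : ∀ i, Touches G {y} (M i))
    (htH : ∀ i, Touches G H (M i)) : ¬ G.IsPlanar := by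
  have hPP : Pairwise (Function.onFun Disjoint (![{x}, {y}, H] : Fin 3 → Set V)) := by
    intro i j hij
    fin_cases i <;> fin_cases j <;> simp_all [Function.onFun, eq_comm]
  refine fun hG ↦ hG.2 (hasMinor_completeBipartiteGraph (P := ![{x}, {y}, H]) (Q := M)
    ?_ hM hPP hMM ?_ ?_)
  · simp [Fin.forall_fin_succ, hH]
  · simp [Fin.forall_fin_succ (n := 2), Fin.forall_fin_succ (n := 1), hHM, hxM, hyM]
  · simp [Fin.forall_fin_succ (n := 2), Fin.forall_fin_succ (n := 1), htx, hty, htH]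

theorem IsCliqueModel.not_isPlanar {x y : V} {M : Fin 3 → Set V} (hM : IsCliqueModel G M)
    (hxy : G.Adj x y) (hxM : ∀ i, x ∉ M i) (hyM : ∀ i, y ∉ M i)
    (htx : ∀ i, Touches G {x} (M i)) (hty : ∀ i, Touches G {y} (M i)) : ¬ G.IsPlanar := by
  have hyM' := hM.cons (A := {y}) (connected_induce_singleton y) (by simpa using hyM) hty
  have hxyM := hyM'.cons (A := {x}) (connected_induce_singleton x)
    (Fin.cases (by simpa using hxy.ne) (by simpa using hxM))
    (Fin.cases ⟨x, rfl, y, rfl, hxy⟩ htx)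
  exact fun hG ↦ hG.1 hxyM.hasMinor

theorem exists_isLink_of_nonseparating {A B C S : Set V} (hAS : A ⊆ S) (hBS : B ⊆ S)
    (hA : A.Nonempty) (hB : B.Nonempty) (hAB : Disjoint A B) (hAC : Disjoint A C)
    (hBC : Disjoint B C) (hsep : (G.induce (S \ C)).Preconnected) :
    ∃ H ⊆ S \ (A ∪ B ∪ C), IsLink G A B H := by
  have hunion : S \ C = A ∪ B ∪ S \ (A ∪ B ∪ C) := by
    rw [Set.union_comm (A ∪ B) C, ← Set.sdiff_sdiff, Set.union_sdiff_cancel]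
    exact Set.union_subset (Set.subset_sdiff.2 ⟨hAS, hAC⟩) (Set.subset_sdiff.2 ⟨hBS, hBC⟩)
  rw [hunion] at hsep
  exact exists_isLink hsep hA hB hAB
    (Set.disjoint_sdiff_right.mono_left (Set.subset_union_right.trans Set.subset_union_left))

theorem isCliqueModel_union_of_isLink {M H : Fin 3 → Set V}
    (hM : ∀ i, (G.induce (M i)).Connected) (hMM : Pairwise (Function.onFun Disjoint M))
    (hHM : ∀ i j, Disjoint (H i) (M j)) (hHH : Pairwise (Function.onFun Disjoint H))
    (hlink : ∀ i, IsLink G (M i) (M (i + 1)) (H i)) : IsCliqueModel G fun i ↦ M i ∪ H i := by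
  refine ⟨fun i ↦ (hlink i).connected_induce_union (hM i), fun i j hij ↦ ?_, fun i j hij ↦ ?_⟩
  · exact (((hMM hij).union_right (hHM j i).symm).union_left
      ((hHM i j).union_right (hHH hij)))
  · have hsucc : i + 1 = j ∨ j + 1 = i := by omega
    obtain rfl | rfl := hsucc
    · exact (hlink i).touches_union.mono subset_rfl Set.subset_union_left
    · exact ((hlink j).touches_union.mono subset_rfl Set.subset_union_left).symm

/-- Link `M i` to `M (i + 1)` for every `i`. If two links meet, their union touches all three sets
`M i` and is the third vertex, besides `x` and `y`, of one side of a `K₃,₃`; otherwise absorbing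
each link into its first end gives, together with `x` and `y`, a `K₅`. -/
theorem not_isPlanar_of_nonseparating {x y : V} {S : Set V} {M : Fin 3 → Set V}
    (hxy : G.Adj x y) (hMS : ∀ i, M i ⊆ S)
    (hM : ∀ i, (G.induce (M i)).Connected) (hMM : Pairwise (Function.onFun Disjoint M))
    (hxM : ∀ i, x ∉ M i) (hyM : ∀ i, y ∉ M i)
    (htx : ∀ i, Touches G {x} (M i)) (hty : ∀ i, Touches G {y} (M i))
    (hsep : ∀ i, (G.induce (S \ insert x (insert y (M i)))).Preconnected) : ¬ G.IsPlanar := by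
  have link (i : Fin 3) := exists_isLink_of_nonseparating (hMS i) (hMS (i + 1))
    (Set.nonempty_coe_sort.1 (hM i).nonempty) (Set.nonempty_coe_sort.1 (hM (i + 1)).nonempty)
    (hMM (by simp)) (by simp [hxM, hyM, hMM (show i ≠ i + 2 by simp)])
    (by simp [hxM, hyM, hMM (show i + 1 ≠ i + 2 by simp)]) (hsep (i + 2))
  choose H hHR hlink using link
  have hxH (i : Fin 3) : x ∉ H i := fun h ↦ (hHR i h).2 (by simp)
  have hyH (i : Fin 3) : y ∉ H i := fun h ↦ (hHR i h).2 (by simp)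
  have hHM (i j : Fin 3) : Disjoint (H i) (M j) := by
    refine Set.disjoint_left.2 fun v hv h ↦ (hHR i hv).2 ?_
    obtain rfl | rfl | rfl : j = i ∨ j = i + 1 ∨ j = i + 2 := by omega
    all_goals simp [h]
  by_cases hHH : Pairwise (Function.onFun Disjoint H)
  · have hmodel := isCliqueModel_union_of_isLink hM hMM hHM hHH hlink
    exact hmodel.not_isPlanar hxy (by simp [hxM, hxH]) (by simp [hyM, hyH])
      (fun i ↦ (htx i).mono subset_rfl Set.subset_union_left)
      fun i ↦ (hty i).mono subset_rfl Set.subset_union_left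
  · obtain ⟨i, j, hij, hmeet⟩ : ∃ i j, i ≠ j ∧ (H i ∩ H j).Nonempty := by
      simpa [Pairwise, Function.onFun, Set.not_disjoint_iff_nonempty_inter] using hHH
    obtain ⟨hi, hiM, hiM'⟩ := (hlink i).of_nonempty hmeet.left
    obtain ⟨hj, hjM, hjM'⟩ := (hlink j).of_nonempty hmeet.right
    have hcover (k : Fin 3) : k = i ∨ k = i + 1 ∨ k = j ∨ k = j + 1 := by omega
    refine not_isPlanar_of_theta hxy.ne (induce_union_connected hi.preconnected hj.preconnected
      hmeet) hM (by simp [hxH]) (by simp [hyH]) hxM hyM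
      (fun k ↦ (hHM i k).union_left (hHM j k)) hMM htx hty fun k ↦ ?_
    obtain rfl | rfl | rfl | rfl := hcover k
    · exact hiM.mono Set.subset_union_left subset_rfl
    · exact hiM'.mono Set.subset_union_left subset_rfl
    · exact hjM.mono Set.subset_union_right subset_rfl
    · exact hjM'.mono Set.subset_union_right subset_rfl

end Nonplanarity

section Counting

open Finset

open Classical in
/-- The `k`-vertex cliques of `G` inside the finite set `S`. For `k = 2` and `k = 3` they encode the
edges and triangles spanned by `S`, in a graph that may be infinite. -/
noncomputable def cliquesIn (G : SimpleGraph V) (k : ℕ) (S : Finset V) : Finset (Finset V) :=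
  {T ∈ S.powersetCard k | G.IsClique T}

open Classical in
/-- The neighbours of `v` inside the finite set `S`. -/
noncomputable def nbrsIn (G : SimpleGraph V) (S : Finset V) (v : V) : Finset V :=
  {u ∈ S | G.Adj v u}

/-- The quantity `4 * n - 2 * e + t` for the subgraph of `G` induced by `S`, with `n` vertices, `e`
edges and `t` triangles. It is at least 8 if `G` is planar and `n ≥ 4`. -/
noncomputable def excess (G : SimpleGraph V) (S : Finset V) : ℤ :=
  4 * #S + #(cliquesIn G 3 S) - 2 * #(cliquesIn G 2 S)

variable {k : ℕ} {S T : Finset V} {u v x y : V}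

theorem mem_cliquesIn : T ∈ cliquesIn G k S ↔ T ⊆ S ∧ #T = k ∧ G.IsClique T := by
  simp [cliquesIn, and_assoc]

@[simp]
theorem mem_nbrsIn : u ∈ nbrsIn G S v ↔ u ∈ S ∧ G.Adj v u := by simp [nbrsIn]

theorem nbrsIn_subset (G : SimpleGraph V) (S : Finset V) (v : V) : nbrsIn G S v ⊆ S :=
  fun _ hu ↦ (mem_nbrsIn.1 hu).1

theorem cliquesIn_mono (hST : S ⊆ T) : cliquesIn G k S ⊆ cliquesIn G k T := by
  intro K hK
  rw [mem_cliquesIn] at hK ⊢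
  exact hK.imp_left hST.trans'

theorem cliquesIn_congr (h : ∀ u ∈ S, ∀ v ∈ S, G.Adj u v ↔ G'.Adj u v) :
    cliquesIn G k S = cliquesIn G' k S := by
  ext T
  simp only [mem_cliquesIn]
  refine and_congr_right fun hTS ↦ and_congr_right fun _ ↦ ?_
  exact forall₄_congr fun u hu v hv ↦ by rw [h u (hTS hu) v (hTS hv)]

theorem cliquesIn_inter [DecidableEq V] (G : SimpleGraph V) (k : ℕ) (S T : Finset V) :
    cliquesIn G k (S ∩ T) = cliquesIn G k S ∩ cliquesIn G k T := by
  ext K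
  simp only [mem_cliquesIn, mem_inter, subset_inter_iff]
  tauto

theorem card_cliquesIn_zero (G : SimpleGraph V) (S : Finset V) : #(cliquesIn G 0 S) = 1 := by
  simp [cliquesIn, filter_singleton]

theorem card_cliquesIn_one (G : SimpleGraph V) (S : Finset V) : #(cliquesIn G 1 S) = #S := by
  classical rw [cliquesIn, powersetCard_one, filter_true_of_mem (by simp), card_map]

theorem insert_mem_cliquesIn_insert [DecidableEq V] (hvS : v ∉ S) (hvT : v ∉ T) :
    insert v T ∈ cliquesIn G (k + 1) (insert v S) ↔ T ∈ cliquesIn G k (nbrsIn G S v) := by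
  have hsub : insert v T ⊆ insert v S ↔ T ⊆ S := insert_subset_insert_iff hvT
  simp only [mem_cliquesIn, hsub, coe_insert, isClique_insert, card_insert_of_notMem hvT,
    Nat.add_right_cancel_iff, subset_iff, mem_nbrsIn, mem_coe]
  grind

theorem card_cliquesIn_insert [DecidableEq V] (G : SimpleGraph V) (k : ℕ) (hv : v ∉ S) :
    #(cliquesIn G (k + 1) (insert v S)) =
      #(cliquesIn G (k + 1) S) + #(cliquesIn G k (nbrsIn G S v)) := by
  have hvN {T : Finset V} (hT : T ∈ cliquesIn G k (nbrsIn G S v)) : v ∉ T := fun hvT ↦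
    hv (nbrsIn_subset G S v ((mem_cliquesIn.1 hT).1 hvT))
  have hsplit : cliquesIn G (k + 1) (insert v S) =
      cliquesIn G (k + 1) S ∪ (cliquesIn G k (nbrsIn G S v)).image (insert v) := by
    ext T
    by_cases hvT : v ∈ T
    · obtain ⟨K, hvK, rfl⟩ : ∃ K, v ∉ K ∧ insert v K = T :=
        ⟨T.erase v, notMem_erase v T, insert_erase hvT⟩
      have hnot : insert v K ∉ cliquesIn G (k + 1) S := fun h ↦
        hv ((mem_cliquesIn.1 h).1 (mem_insert_self v K))
      rw [insert_mem_cliquesIn_insert hv hvK, mem_union, or_iff_right hnot, mem_image]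
      refine ⟨fun hK ↦ ⟨K, hK, rfl⟩, ?_⟩
      rintro ⟨K', hK', h⟩
      rwa [← erase_insert hvK, ← h, erase_insert (hvN hK')]
    · have hnot : T ∉ (cliquesIn G k (nbrsIn G S v)).image (insert v) := by
        rintro h
        obtain ⟨K, -, rfl⟩ := mem_image.1 h
        exact hvT (mem_insert_self v K)
      rw [mem_union, or_iff_left hnot, mem_cliquesIn, mem_cliquesIn,
        subset_insert_iff_of_notMem hvT]
  have hdisj : Disjoint (cliquesIn G (k + 1) S)
      ((cliquesIn G k (nbrsIn G S v)).image (insert v)) := by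
    refine disjoint_left.2 fun T hT hT' ↦ ?_
    obtain ⟨T', -, rfl⟩ := mem_image.1 hT'
    exact hv ((mem_cliquesIn.1 hT).1 (mem_insert_self v T'))
  have hinj : Set.InjOn (insert v) (SetLike.coe (cliquesIn G k (nbrsIn G S v))) := by
    intro T hT T' hT' h
    rw [← erase_insert (hvN hT), h, erase_insert (hvN hT')]
  rw [hsplit, card_union_of_disjoint hdisj, card_image_of_injOn hinj]

theorem card_cliquesIn_eq_erase_add [DecidableEq V] (G : SimpleGraph V) (k : ℕ) (hv : v ∈ S) :
    #(cliquesIn G (k + 1) S) =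
      #(cliquesIn G (k + 1) (S.erase v)) + #(cliquesIn G k (nbrsIn G S v)) := by
  have hnbrs : nbrsIn G (S.erase v) v = nbrsIn G S v := by
    ext u
    have := G.ne_of_adj (a := v) (b := u)
    simp only [mem_nbrsIn, mem_erase]
    tauto
  conv_lhs => rw [← insert_erase hv, card_cliquesIn_insert G k (notMem_erase v S), hnbrs]

theorem card_cliquesIn_union_add_inter [DecidableEq V]
    (hsep : ∀ u ∈ S \ T, ∀ v ∈ T \ S, ¬ G.Adj u v) (k : ℕ) :
    #(cliquesIn G k (S ∪ T)) + #(cliquesIn G k (S ∩ T)) =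
      #(cliquesIn G k S) + #(cliquesIn G k T) := by
  have hunion : cliquesIn G k (S ∪ T) = cliquesIn G k S ∪ cliquesIn G k T := by
    refine subset_antisymm (fun K hK ↦ ?_) (union_subset (cliquesIn_mono subset_union_left)
      (cliquesIn_mono subset_union_right))
    obtain ⟨hKST, hKk, hK⟩ := mem_cliquesIn.1 hK
    have hside : K ⊆ S ∨ K ⊆ T := by
      by_contra! h
      obtain ⟨u, huK, huS⟩ := not_subset.1 h.1
      obtain ⟨v, hvK, hvT⟩ := not_subset.1 h.2
      have huT := (mem_union.1 (hKST huK)).resolve_left huS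
      have hvS := (mem_union.1 (hKST hvK)).resolve_right hvT
      exact hsep v (mem_sdiff.2 ⟨hvS, hvT⟩) u (mem_sdiff.2 ⟨huT, huS⟩)
        (hK hvK huK fun h ↦ huS (h ▸ hvS))
    exact mem_union.2 (hside.imp (fun h ↦ mem_cliquesIn.2 ⟨h, hKk, hK⟩)
      fun h ↦ mem_cliquesIn.2 ⟨h, hKk, hK⟩)
  rw [hunion, cliquesIn_inter, card_union_add_card_inter]

theorem excess_union_add_inter [DecidableEq V] (hsep : ∀ u ∈ S \ T, ∀ v ∈ T \ S, ¬ G.Adj u v) :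
    excess G (S ∪ T) + excess G (S ∩ T) = excess G S + excess G T := by
  have h₁ := card_union_add_card_inter S T
  have h₂ := card_cliquesIn_union_add_inter hsep 2
  have h₃ := card_cliquesIn_union_add_inter hsep 3
  simp only [excess]
  lia

theorem card_cliquesIn_deleteEdges (hxy : G.Adj x y) (hx : x ∈ S) (hy : y ∈ S) (k : ℕ) :
    #(cliquesIn (G.deleteEdges {s(x, y)}) (k + 2) S) +
      #(cliquesIn G k (nbrsIn G (nbrsIn G S x) y)) = #(cliquesIn G (k + 2) S) := by
  classical
  have hnbrs : nbrsIn (G.deleteEdges {s(x, y)}) S x = (nbrsIn G S x).erase y := by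
    ext v
    have := hxy.ne
    simp only [mem_nbrsIn, mem_erase, deleteEdges_adj, Set.mem_singleton_iff, Sym2.eq_iff]
    grind
  have hcongr (A : Finset V) (j : ℕ) (hA : x ∉ A) :
      cliquesIn (G.deleteEdges {s(x, y)}) j A = cliquesIn G j A := by
    refine cliquesIn_congr fun u hu v hv ↦ ?_
    simp only [deleteEdges_adj, Set.mem_singleton_iff, Sym2.eq_iff]
    grind
  rw [card_cliquesIn_eq_erase_add _ (k + 1) hx, card_cliquesIn_eq_erase_add G (k + 1) hx, hnbrs,
    card_cliquesIn_eq_erase_add G k (mem_nbrsIn.2 ⟨hy, hxy⟩), hcongr _ _ (notMem_erase x S),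
    hcongr _ _ (by simp), add_assoc]

theorem excess_deleteEdges (hxy : G.Adj x y) (hx : x ∈ S) (hy : y ∈ S) :
    excess (G.deleteEdges {s(x, y)}) S + #(nbrsIn G (nbrsIn G S x) y) = excess G S + 2 := by
  have h₂ := card_cliquesIn_deleteEdges hxy hx hy 0
  have h₃ := card_cliquesIn_deleteEdges hxy hx hy 1
  rw [card_cliquesIn_zero] at h₂
  rw [card_cliquesIn_one] at h₃
  simp only [excess]
  lia

open Classical in
/-- The pairs `(a, b)` for which `x, a, b, y` is a path in `G`, where `a = b` is allowed, with `a`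
and `b` in `R`: for an edge `xy` they are the triangles and 4-cycles through `xy` whose remaining
vertices are in `R`. -/
noncomputable def middles (G : SimpleGraph V) (R : Finset V) (x y : V) : Finset (V × V) :=
  {p ∈ nbrsIn G R x ×ˢ nbrsIn G R y | p.1 = p.2 ∨ G.Adj p.1 p.2}

theorem mk_mem_middles {R : Finset V} {x y a b : V} : (a, b) ∈ middles G R x y ↔
    (a ∈ R ∧ G.Adj x a) ∧ (b ∈ R ∧ G.Adj y b) ∧ (a = b ∨ G.Adj a b) := by
  simp [middles, and_assoc]

theorem mk_mem_middles_comm {R : Finset V} {x y a b : V} :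
    (a, b) ∈ middles G R x y ↔ (b, a) ∈ middles G R y x := by
  simp only [mk_mem_middles, eq_comm (a := a), G.adj_comm a]
  tauto

theorem card_middles [DecidableEq V] [DecidableRel G.Adj] (R : Finset V) (x y : V) :
    #(middles G R x y) = #(nbrsIn G R x ∩ nbrsIn G R y) +
      #{p ∈ nbrsIn G R x ×ˢ nbrsIn G R y | G.Adj p.1 p.2} := by
  have hdiag : #{p ∈ nbrsIn G R x ×ˢ nbrsIn G R y | p.1 = p.2} =
      #(nbrsIn G R x ∩ nbrsIn G R y) := by
    refine card_bij' (fun p _ ↦ p.1) (fun z _ ↦ (z, z)) ?_ ?_ ?_ ?_ <;> grind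
  rw [← hdiag, ← card_union_of_disjoint (disjoint_filter.2 fun p _ hp hadj ↦ hadj.ne hp),
    ← filter_or, middles]
  congr!

theorem card_cliquesIn_two_union_le [DecidableEq V] [DecidableRel G.Adj] (A B : Finset V) :
    #(cliquesIn G 2 (A ∪ B)) ≤
      #(cliquesIn G 2 A) + #(cliquesIn G 2 B) + #{p ∈ A ×ˢ B | G.Adj p.1 p.2} := by
  set crossing : Finset (Finset V) := {p ∈ A ×ˢ B | G.Adj p.1 p.2}.image fun p ↦ {p.1, p.2}
  have hcover : cliquesIn G 2 (A ∪ B) ⊆ cliquesIn G 2 A ∪ cliquesIn G 2 B ∪ crossing := by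
    intro K hK
    obtain ⟨hKAB, hK2, hK⟩ := mem_cliquesIn.1 hK
    obtain ⟨u, v, huv, rfl⟩ := card_eq_two.1 hK2
    have hadj : G.Adj u v := hK (by simp) (by simp) huv
    simp only [crossing, mem_union, mem_cliquesIn, mem_image, mem_filter, mem_product,
      Prod.exists, insert_subset_iff, singleton_subset_iff] at hKAB ⊢
    grind [Finset.pair_comm, G.adj_comm]
  calc #(cliquesIn G 2 (A ∪ B))
      ≤ #(cliquesIn G 2 A ∪ cliquesIn G 2 B ∪ crossing) := card_le_card hcover
    _ ≤ #(cliquesIn G 2 A ∪ cliquesIn G 2 B) + #crossing := card_union_le _ _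
    _ ≤ _ := Nat.add_le_add (card_union_le _ _) card_image_le

theorem excess_insert [DecidableEq V] (G : SimpleGraph V) (hv : v ∉ S) :
    excess G (insert v S) =
      excess G S + 4 + #(cliquesIn G 2 (nbrsIn G S v)) - 2 * #(nbrsIn G S v) := by
  rw [excess, card_cliquesIn_insert G 2 hv, card_cliquesIn_insert G 1 hv, card_insert_of_notMem hv,
    card_cliquesIn_one, excess]
  push_cast
  ring

theorem contract_adj_iff_of_ne (hu : u ≠ x) (hu' : u ≠ y) (hv : v ≠ x) (hv' : v ≠ y) :
    (contract G x y).Adj u v ↔ G.Adj u v := by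
  classical
  have := G.ne_of_adj (a := u) (b := v)
  simp only [contract, map_adj', Function.update_apply]
  grind

theorem contract_adj_left_iff (hxy : x ≠ y) (hv : v ≠ x) (hv' : v ≠ y) :
    (contract G x y).Adj x v ↔ G.Adj x v ∨ G.Adj y v := by
  classical
  simp only [contract, map_adj', Function.update_apply]
  grind

theorem excess_contract_add_two_le [DecidableEq V] {R : Finset V} (hxy : G.Adj x y)
    (hx : x ∉ R) (hy : y ∉ R) :
    excess (contract G x y) (insert x R) + 2 ≤
      excess G (insert x (insert y R)) + #(middles G R x y) := by
  classical
  set A := nbrsIn G R x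
  set B := nbrsIn G R y
  have hcongr {S : Finset V} (hS : S ⊆ R) (k : ℕ) :
      cliquesIn (contract G x y) k S = cliquesIn G k S := by
    refine cliquesIn_congr fun u hu v hv ↦ ?_
    have hu := hS hu
    have hv := hS hv
    exact contract_adj_iff_of_ne (by grind) (by grind) (by grind) (by grind)
  have hnbrs_contract : nbrsIn (contract G x y) R x = A ∪ B := by
    ext v
    by_cases hv : v ∈ R
    · simp [A, B, hv, contract_adj_left_iff hxy.ne (by grind : v ≠ x) (by grind : v ≠ y)]
    · simp [A, B, hv]
  have hnbrs_x : nbrsIn G (insert y R) x = insert y A := by grind [mem_nbrsIn]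
  have hnbrs_y : nbrsIn G A y = A ∩ B := by grind [mem_nbrsIn]
  have hyA : y ∉ A := fun h ↦ hy (nbrsIn_subset G R x h)
  have hAB : A ∪ B ⊆ R := union_subset (nbrsIn_subset G R x) (nbrsIn_subset G R y)
  have hR : excess (contract G x y) R = excess G R := by
    simp only [excess, hcongr subset_rfl]
  have hcontract := excess_insert (contract G x y) hx
  rw [hR, hnbrs_contract, hcongr hAB] at hcontract
  have hG := excess_insert G (S := insert y R) (v := x) (by simp [hx, hxy.ne])
  rw [hnbrs_x, card_cliquesIn_insert G 1 hyA, card_cliquesIn_one, hnbrs_y,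
    card_insert_of_notMem hyA, excess_insert G hy] at hG
  have hcard := card_union_add_card_inter A B
  have hunion := card_cliquesIn_two_union_le (G := G) A B
  have hmiddles := card_middles (G := G) R x y
  lia

theorem nbrsIn_insert_of_adj [DecidableEq V] (h : G.Adj v u) :
    nbrsIn G (insert u S) v = insert u (nbrsIn G S v) := by
  grind [mem_nbrsIn]

theorem nbrsIn_insert_of_not_adj [DecidableEq V] (h : ¬ G.Adj v u) :
    nbrsIn G (insert u S) v = nbrsIn G S v := by
  grind [mem_nbrsIn]

theorem nbrsIn_singleton_of_adj (h : G.Adj v u) : nbrsIn G {u} v = {u} := by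
  simpa [nbrsIn, filter_singleton] using h

theorem nbrsIn_singleton_of_not_adj (h : ¬ G.Adj v u) : nbrsIn G {u} v = ∅ := by
  simpa [nbrsIn, filter_singleton] using h

theorem cliquesIn_succ_empty (G : SimpleGraph V) (k : ℕ) : cliquesIn G (k + 1) ∅ = ∅ := by
  simp [cliquesIn]

theorem cliquesIn_add_two_singleton (G : SimpleGraph V) (k : ℕ) (v : V) :
    cliquesIn G (k + 2) {v} = ∅ := by
  simp [cliquesIn]

theorem excess_singleton (G : SimpleGraph V) (v : V) : excess G {v} = 4 := by
  simp [excess, cliquesIn_add_two_singleton]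

theorem excess_triangle [DecidableEq V] {a b c : V} (hab : G.Adj a b) (hac : G.Adj a c)
    (hbc : G.Adj b c) : excess G {a, b, c} = 7 := by
  have := hab.ne; have := hac.ne; have := hbc.ne
  simp [excess_insert, excess_singleton, card_cliquesIn_insert, card_cliquesIn_one,
    cliquesIn_add_two_singleton, nbrsIn_insert_of_adj, nbrsIn_singleton_of_adj, *]

theorem excess_four_cycle [DecidableEq V] {a b c d : V} (hab : G.Adj a b) (hbc : G.Adj b c)
    (hcd : G.Adj c d) (hda : G.Adj d a) (hac : a ≠ c) (hbd : b ≠ d) :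
    excess G {a, b, c, d} = 8 := by
  have := hab.ne; have := hbc.ne; have := hcd.ne; have := hda.ne'; have := hda.symm
  by_cases G.Adj a c <;> by_cases G.Adj b d <;>
  simp [excess_insert, excess_singleton, card_cliquesIn_insert, card_cliquesIn_one,
    card_cliquesIn_zero, cliquesIn_succ_empty, cliquesIn_add_two_singleton,
    nbrsIn_insert_of_adj, nbrsIn_insert_of_not_adj, nbrsIn_singleton_of_adj,
    nbrsIn_singleton_of_not_adj, *]

theorem eight_le_excess_of_card_eq_four (G : SimpleGraph V) (hS : #S = 4) : 8 ≤ excess G S := by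
  classical
  obtain ⟨a, b, c, d, hab, hac, had, hbc, hbd, hcd, rfl⟩ := card_eq_four.1 hS
  by_cases G.Adj a b <;> by_cases G.Adj a c <;> by_cases G.Adj a d <;>
  by_cases G.Adj b c <;> by_cases G.Adj b d <;> by_cases G.Adj c d <;>
  simp [excess_insert, excess_singleton, card_cliquesIn_insert, card_cliquesIn_one,
    card_cliquesIn_zero, cliquesIn_succ_empty, cliquesIn_add_two_singleton,
    nbrsIn_insert_of_adj, nbrsIn_insert_of_not_adj, nbrsIn_singleton_of_adj,
    nbrsIn_singleton_of_not_adj, *]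

theorem eight_le_excess_completeBipartite [DecidableEq V] {p q a b c : V} (hpq : p ≠ q)
    (hab : a ≠ b) (hac : a ≠ c) (hbc : b ≠ c) (hpa : G.Adj p a) (hpb : G.Adj p b)
    (hpc : G.Adj p c) (hqa : G.Adj q a) (hqb : G.Adj q b) (hqc : G.Adj q c) :
    8 ≤ excess G {p, q, a, b, c} := by
  have := hpa.ne; have := hpb.ne; have := hpc.ne; have := hqa.ne; have := hqb.ne; have := hqc.ne
  by_cases G.Adj p q <;> by_cases G.Adj a b <;> by_cases G.Adj a c <;> by_cases G.Adj b c <;>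
  simp [excess_insert, excess_singleton, card_cliquesIn_insert, card_cliquesIn_one,
    card_cliquesIn_zero, cliquesIn_succ_empty, cliquesIn_add_two_singleton,
    nbrsIn_insert_of_adj, nbrsIn_insert_of_not_adj, nbrsIn_singleton_of_adj,
    nbrsIn_singleton_of_not_adj, *]

end Counting

section Critical

open Finset

variable [DecidableEq V] {S : Finset V} {x y : V}

/-- The properties of a minimal counterexample to the bound `8 ≤ excess G S`: no deletion of an
edge in two triangles, no contraction of an edge with at most two middles, and no splitting along
a separator `C` with `excess G C ≤ 8` leads to a smaller one. -/
structure IsCritical (G : SimpleGraph V) (S : Finset V) : Prop where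
  four_le_card : 4 ≤ #S
  excess_lt : excess G S < 8
  card_common_le : ∀ x ∈ S, ∀ y ∈ S, G.Adj x y → #(nbrsIn G (nbrsIn G S x) y) ≤ 1
  three_le_middles : ∀ x ∈ S, ∀ y ∈ S, G.Adj x y → 3 ≤ #(middles G (S \ {x, y}) x y)
  preconnected_sdiff : ∀ C ⊆ S, 3 ≤ #C → excess G C ≤ 8 →
    (G.induce ((S : Set V) \ C)).Preconnected

namespace IsCritical

theorem touches_singleton (hS : IsCritical G S) {C : Finset V} {v : V} {H : Set V} (hCS : C ⊆ S)
    (hC : 3 ≤ #C) (hC8 : excess G C ≤ 8) (hv : v ∈ S) (hvC : v ∉ C)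
    (hHS : H ⊆ (S : Set V) \ (insert v C : Finset V)) (hH : H.Nonempty)
    (hclosed : ∀ u ∈ H, ∀ w ∈ (S : Set V) \ (insert v C : Finset V), G.Adj u w → w ∈ H) :
    Touches G H {v} := by
  obtain ⟨h, hh⟩ := hH
  have hvH : v ∉ H := fun hv' ↦ (hHS hv').2 (by simp)
  have hhC : h ∉ C := fun hhC ↦ (hHS hh).2 (by simp [hhC])
  obtain ⟨u, ⟨-, hu⟩, w, ⟨⟨hwS, hwC⟩, hwH⟩, huw⟩ := exists_adj_of_preconnected_induce
    (hS.preconnected_sdiff C hCS hC hC8) ⟨h, ⟨(hHS hh).1, hhC⟩, hh⟩ ⟨v, ⟨hv, hvC⟩, hvH⟩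
  have hwv : w = v := by
    by_contra hwv
    exact hwH (hclosed u hu w ⟨hwS, by simpa [hwv] using hwC⟩ huw)
  exact ⟨u, hu, w, hwv, huw⟩

/-- The `K₂,₃` on `p, q` and the `m i` is not all of `S`. As the 4-cycle through `p`, `q` and two of
the `m i` does not separate, each component of the rest touches the third, which gives a `K₃,₃`. -/
theorem not_isPlanar_of_common_nbrs (hS : IsCritical G S) {p q : V} {m : Fin 3 → V}
    (hpS : p ∈ S) (hqS : q ∈ S) (hmS : ∀ i, m i ∈ S) (hpq : p ≠ q) (hm : m.Injective)
    (hpm : ∀ i, G.Adj p (m i)) (hqm : ∀ i, G.Adj q (m i)) : ¬ G.IsPlanar := by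
  have hmne {i j : Fin 3} (hij : i ≠ j) : m i ≠ m j := hm.ne hij
  let C (i : Fin 3) : Finset V := {p, m (i + 1), q, m (i + 2)}
  let K : Finset V := {p, q, m 0, m 1, m 2}
  have hK (i : Fin 3) : K = insert (m i) (C i) := by
    fin_cases i <;> grind
  have hK8 : 8 ≤ excess G K :=
    eight_le_excess_completeBipartite hpq (hmne (by simp)) (hmne (by simp)) (hmne (by simp))
      (hpm _) (hpm _) (hpm _) (hqm _) (hqm _) (hqm _)
  have hKS : K ⊂ S := by
    refine ssubset_of_subset_of_ne ?_ fun h ↦ hS.excess_lt.not_ge (h ▸ hK8)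
    simp [hK 0, C, insert_subset_iff, *]
  obtain ⟨v, hvS, hvK⟩ := exists_of_ssubset hKS
  obtain ⟨H, hHR, hvH, hH, hclosed⟩ :=
    exists_connected_induce_closed (G := G) (R := (S : Set V) \ K) ⟨hvS, hvK⟩
  have notMem {w : V} (hw : w ∈ K) : w ∉ H := fun h ↦ (hHR h).2 hw
  have htouch (i : Fin 3) : Touches G H {m i} := by
    refine hS.touches_singleton (C := C i) (by simp [C, insert_subset_iff, *]) ?_ ?_ (hmS i)
      (by simp [C, (hpm i).ne', (hqm i).ne', hm.eq_iff]) (hK i ▸ hHR) ⟨v, hvH⟩ (hK i ▸ hclosed)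
    · exact two_lt_card.2 ⟨p, by simp [C], m (i + 1), by simp [C], m (i + 2), by simp [C],
        (hpm _).ne, (hpm _).ne, hmne (by simp)⟩
    · exact (excess_four_cycle (hpm _) (hqm _).symm (hqm _) (hpm _).symm hpq
        (hmne (by simp))).le
  exact not_isPlanar_of_theta hpq hH (fun i ↦ connected_induce_singleton (m i))
    (notMem (by simp [K])) (notMem (by simp [K])) (fun i ↦ (hpm i).ne) (fun i ↦ (hqm i).ne)
    (fun i ↦ Set.disjoint_singleton_right.2 (notMem (by simp [hK i])))
    (fun i j hij ↦ by simpa [Function.onFun] using hmne hij)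
    (fun i ↦ ⟨p, rfl, m i, rfl, hpm i⟩) (fun i ↦ ⟨q, rfl, m i, rfl, hqm i⟩) htouch

theorem eq_of_common_adj (hS : IsCritical G S) (hx : x ∈ S) (hy : y ∈ S) (hxy : G.Adj x y)
    {u v : V} (hu : u ∈ S) (hv : v ∈ S) (hxu : G.Adj x u) (hyu : G.Adj y u) (hxv : G.Adj x v)
    (hyv : G.Adj y v) : u = v :=
  card_le_one.1 (hS.card_common_le x hx y hy hxy) u (by simp [*]) v (by simp [*])

theorem snd_eq_of_mem_middles (hS : IsCritical G S) (hG : G.IsPlanar) (hx : x ∈ S) (hy : y ∈ S)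
    (hxy : G.Adj x y) {a b d : V} (hab : (a, b) ∈ middles G (S \ {x, y}) x y)
    (had : (a, d) ∈ middles G (S \ {x, y}) x y) : b = d := by
  simp only [mk_mem_middles, mem_sdiff, mem_insert, mem_singleton, not_or] at hab had
  obtain ⟨⟨⟨ha, -, hay⟩, hxa⟩, ⟨⟨hb, hbx, -⟩, hyb⟩, hab⟩ := hab
  obtain ⟨-, ⟨⟨hd, hdx, -⟩, hyd⟩, had⟩ := had
  by_contra hbd
  rcases hab with rfl | hab
  · exact hdx (hS.eq_of_common_adj hy ha hyb hd hx hyd (had.resolve_left hbd) hxy.symm hxa.symm)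
  rcases had with rfl | had
  · exact hbx (hS.eq_of_common_adj hy ha hyd hb hx hyb hab hxy.symm hxa.symm)
  refine hS.not_isPlanar_of_common_nbrs (m := ![x, b, d]) ha hy ?_ hay ?_ ?_ ?_ hG
  · simp [Fin.forall_fin_succ, *]
  · simp [Function.Injective, Fin.forall_fin_succ, hbx, hdx, Ne.symm hbx, Ne.symm hdx, hbd,
      Ne.symm hbd]
  · simp [Fin.forall_fin_succ, hab, had, hxa.symm]
  · simp [Fin.forall_fin_succ, hyb, hyd, hxy.symm]

theorem fst_eq_of_mem_middles (hS : IsCritical G S) (hG : G.IsPlanar) (hx : x ∈ S) (hy : y ∈ S)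
    (hxy : G.Adj x y) {a b c : V} (hab : (a, b) ∈ middles G (S \ {x, y}) x y)
    (hcb : (c, b) ∈ middles G (S \ {x, y}) x y) : a = c := by
  rw [mk_mem_middles_comm, pair_comm] at hab hcb
  exact hS.snd_eq_of_mem_middles hG hy hx hxy.symm hab hcb

theorem fst_ne_snd_of_mem_middles (hS : IsCritical G S) (hG : G.IsPlanar) (hx : x ∈ S)
    (hy : y ∈ S) (hxy : G.Adj x y) {p q : V × V} (hp : p ∈ middles G (S \ {x, y}) x y)
    (hq : q ∈ middles G (S \ {x, y}) x y) (hpq : p ≠ q) : p.1 ≠ q.2 := by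
  obtain ⟨a, b⟩ := p
  obtain ⟨c, d⟩ := q
  rintro (rfl : a = d)
  have hca : c ≠ a := by
    rintro rfl
    exact hpq (congrArg _ (hS.snd_eq_of_mem_middles hG hx hy hxy hp hq))
  simp only [mk_mem_middles, mem_sdiff, mem_insert, mem_singleton, not_or] at hp hq
  obtain ⟨⟨⟨ha, -, -⟩, hxa⟩, -⟩ := hp
  obtain ⟨⟨⟨hc, -, hcy⟩, hxc⟩, ⟨-, hya⟩, hca'⟩ := hq
  exact hcy (hS.eq_of_common_adj hx ha hxa hc hy hxc (hca'.resolve_left hca).symm hxy hya.symm)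

theorem disjoint_of_mem_middles (hS : IsCritical G S) (hG : G.IsPlanar) (hx : x ∈ S) (hy : y ∈ S)
    (hxy : G.Adj x y) {p q : V × V} (hp : p ∈ middles G (S \ {x, y}) x y)
    (hq : q ∈ middles G (S \ {x, y}) x y) (hpq : p ≠ q) :
    Disjoint ({p.1, p.2} : Set V) {q.1, q.2} := by
  have hfst : p.1 ≠ q.1 := by
    obtain ⟨a, b⟩ := p
    rintro rfl
    exact hpq (Prod.ext rfl (hS.snd_eq_of_mem_middles hG hx hy hxy hp hq))
  have hsnd : p.2 ≠ q.2 := by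
    obtain ⟨a, b⟩ := p
    rintro rfl
    exact hpq (Prod.ext (hS.fst_eq_of_mem_middles hG hx hy hxy hp hq) rfl)
  have hpq' := hS.fst_ne_snd_of_mem_middles hG hx hy hxy hp hq hpq
  have hqp' := hS.fst_ne_snd_of_mem_middles hG hx hy hxy hq hp hpq.symm
  simp [hfst.symm, hsnd.symm, hpq'.symm, hqp']

theorem preconnected_sdiff_of_mem_middles (hS : IsCritical G S) (hx : x ∈ S) (hy : y ∈ S)
    (hxy : G.Adj x y) {p : V × V} (hp : p ∈ middles G (S \ {x, y}) x y) :
    (G.induce ((S : Set V) \ insert x (insert y {p.1, p.2}))).Preconnected := by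
  obtain ⟨a, b⟩ := p
  simp only [mk_mem_middles, mem_sdiff, mem_insert, mem_singleton, not_or] at hp
  obtain ⟨⟨⟨ha, hax, hay⟩, hxa⟩, ⟨⟨hb, hbx, hby⟩, hyb⟩, hab⟩ := hp
  have hCS : ({x, y, a, b} : Finset V) ⊆ S := by simp [insert_subset_iff, *]
  have hC : 3 ≤ #{x, y, a, b} := two_lt_card.2 ⟨x, by simp, y, by simp, a, by simp,
    hxy.ne, Ne.symm hax, Ne.symm hay⟩
  have hC8 : excess G {x, y, a, b} ≤ 8 := by
    rcases hab with rfl | hab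
    · rw [pair_eq_singleton, excess_triangle hxy hxa hyb]
      simp
    · rw [pair_comm a b, insert_comm x y, insert_comm x b, insert_comm y b]
      exact (excess_four_cycle hyb.symm hxy.symm hxa hab hbx (Ne.symm hay)).le
  have hcoe : insert x (insert y {a, b}) = (({x, y, a, b} : Finset V) : Set V) := by simp
  exact hcoe ▸ hS.preconnected_sdiff _ hCS hC hC8

theorem exists_adj (hS : IsCritical G S) : ∃ x ∈ S, ∃ y ∈ S, G.Adj x y := by
  have hpos : 0 < #(cliquesIn G 2 S) := by
    have := hS.four_le_card
    have := hS.excess_lt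
    unfold excess at this
    lia
  obtain ⟨T, hT⟩ := card_pos.1 hpos
  obtain ⟨hTS, hT2, hT⟩ := mem_cliquesIn.1 hT
  obtain ⟨x, y, hxy, rfl⟩ := card_eq_two.1 hT2
  exact ⟨x, hTS (by simp), y, hTS (by simp), hT (by simp) (by simp) hxy⟩

theorem not_isPlanar (hS : IsCritical G S) : ¬ G.IsPlanar := by
  intro hG
  obtain ⟨x, hx, y, hy, hxy⟩ := hS.exists_adj
  have h3 := hS.three_le_middles x hx y hy hxy
  obtain ⟨m⟩ : Nonempty (Fin 3 ↪ middles G (S \ {x, y}) x y) :=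
    Function.Embedding.nonempty_of_card_le (by simpa using h3)
  let a (i : Fin 3) : V := (m i).1.1
  let b (i : Fin 3) : V := (m i).1.2
  have spec (i : Fin 3) := mk_mem_middles.1 (show (a i, b i) ∈ _ from (m i).2)
  simp only [mem_sdiff, mem_insert, mem_singleton, not_or] at spec
  refine not_isPlanar_of_nonseparating (S := S) (M := fun i ↦ {a i, b i}) hxy
    (fun i ↦ ?_) (fun i ↦ ?_) (fun i j hij ↦ ?_) (fun i ↦ ?_) (fun i ↦ ?_) (fun i ↦ ?_)
    (fun i ↦ ?_) (fun i ↦ ?_) hG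
  · simp [Set.insert_subset_iff, spec i]
  · obtain ⟨-, -, hab | hab⟩ := spec i
    · rw [hab, Set.pair_eq_singleton]
      exact connected_induce_singleton (b i)
    · exact induce_pair_connected_of_adj hab
  · exact hS.disjoint_of_mem_middles hG hx hy hxy (m i).2 (m j).2
      (Subtype.val_injective.ne (m.injective.ne hij))
  · simp [eq_comm (a := x), spec i]
  · simp [eq_comm (a := y), spec i]
  · exact ⟨x, rfl, a i, by simp, (spec i).1.2⟩
  · exact ⟨y, rfl, b i, by simp, (spec i).2.1.2⟩
  · exact hS.preconnected_sdiff_of_mem_middles hx hy hxy (m i).2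

end IsCritical
end Critical

section Bound

open Finset

theorem eight_le_excess_of_not_preconnected {S C : Finset V} (hCS : C ⊆ S) (hC : excess G C ≤ 8)
    (hsep : ¬ (G.induce ((S : Set V) \ C)).Preconnected)
    (hsub : ∀ T ⊂ S, C ⊂ T → 8 ≤ excess G T) : 8 ≤ excess G S := by
  classical
  obtain ⟨v, hvR⟩ : ((S : Set V) \ C).Nonempty := by
    by_contra! h
    exact hsep (h ▸ Preconnected.of_subsingleton)
  obtain ⟨H, hHR, hvH, hH, hclosed⟩ := exists_connected_induce_closed (G := G) hvR
  obtain ⟨w, hwR, hwH⟩ := Set.exists_of_ssubset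
    (hHR.ssubset_of_ne fun h ↦ hsep (h ▸ hH.preconnected))
  let X : Finset V := {u ∈ S | u ∈ C ∨ u ∈ H}
  let Y : Finset V := {u ∈ S | u ∉ H}
  have hXY_union : X ∪ Y = S := by grind
  have hXY_inter : X ∩ Y = C := by
    have hCH : ∀ u ∈ C, u ∉ H := fun u hu huH ↦ (hHR huH).2 hu
    grind
  have hX : 8 ≤ excess G X := hsub X (by grind) (by grind)
  have hY : 8 ≤ excess G Y := hsub Y (by grind) (by grind)
  have hadd := excess_union_add_inter (G := G) (S := X) (T := Y) fun u hu w hw huw ↦ by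
    simp only [X, Y, mem_sdiff, mem_filter] at hu hw
    have huH : u ∈ H := by tauto
    have hwR : w ∈ (S : Set V) \ C := ⟨hw.1.1, by tauto⟩
    exact hw.1.2 (hclosed u huH w hwR huw)
  rw [hXY_union, hXY_inter] at hadd
  lia

theorem eight_le_excess {G : SimpleGraph V} {S : Finset V} (hG : G.IsPlanar) (hS : 4 ≤ #S) :
    8 ≤ excess G S := by
  classical
  by_contra! hlt
  have hcritical : IsCritical G S := {
    four_le_card := hS
    excess_lt := hlt
    card_common_le x hx y hy hxy := by
      by_contra! hcommon
      have hdelete := eight_le_excess (isPlanar_anti (G.deleteEdges_le {s(x, y)}) hG) hS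
      have := excess_deleteEdges hxy hx hy
      lia
    three_le_middles x hx y hy hxy := by
      by_contra! hmiddles
      have hS_ne : #S ≠ 4 := fun h ↦ hlt.not_ge (eight_le_excess_of_card_eq_four G h)
      have hcard : #(insert x (S \ {x, y})) + 1 = #S := by
        rw [sdiff_insert, sdiff_singleton_eq_erase, insert_erase (by simp [hx, hxy.ne]),
          card_erase_add_one hy]
      have hcontract := eight_le_excess (isPlanar_contract hxy hG)
        (S := insert x (S \ {x, y})) (by lia)
      have := excess_contract_add_two_le (R := S \ {x, y}) hxy (by simp) (by simp)
      have hins : insert x (insert y (S \ {x, y})) = S := by grind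
      rw [hins] at this
      lia
    preconnected_sdiff C hCS hC hC8 := by
      by_contra hsep
      refine hlt.not_ge (eight_le_excess_of_not_preconnected hCS hC8 hsep fun T hTS hCT ↦ ?_)
      have := card_lt_card hTS
      exact eight_le_excess hG (hC.trans_lt (card_lt_card hCT)) }
  exact hcritical.not_isPlanar hG
termination_by (#S, #(cliquesIn G 2 S))
decreasing_by
  · have := card_cliquesIn_deleteEdges hxy hx hy 0
    rw [card_cliquesIn_zero] at this
    exact Prod.Lex.right _ (by lia)
  · exact Prod.Lex.left _ _ (by lia)
  · exact Prod.Lex.left _ _ (by lia)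

end Bound

section StarForests

open Finset

theorem cliquesIn_eq_empty_of_cliqueFree {k : ℕ} (hG : G.CliqueFree k) (S : Finset V) :
    cliquesIn G k S = ∅ :=
  eq_empty_of_forall_notMem fun T hT ↦
    have ⟨_, hcard, hT⟩ := mem_cliquesIn.1 hT
    hG T ⟨hT, hcard⟩

theorem card_cliquesIn_two_le_of_cliqueFree (hG : G.IsPlanar) (hG3 : G.CliqueFree 3)
    (S : Finset V) : #(cliquesIn G 2 S) ≤ 2 * #S := by
  by_cases hS : 4 ≤ #S
  · have hexcess := eight_le_excess hG hS
    rw [excess, cliquesIn_eq_empty_of_cliqueFree hG3, card_empty] at hexcess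
    lia
  · have hle : #(cliquesIn G 2 S) ≤ (#S).choose 2 := by
      classical exact (card_filter_le _ _).trans (card_powersetCard 2 S).le
    have hchoose : (#S).choose 2 ≤ 2 * #S := by
      have : #S < 4 := by lia
      interval_cases #S <;> decide
    exact hle.trans hchoose

theorem colorable_two_of_adj_iff {A : Set V} (hA : ∀ u v, G.Adj u v → (u ∈ A ↔ v ∉ A)) :
    G.Colorable 2 := by
  have c : G.Coloring Prop := Coloring.mk (· ∈ A) fun {u v} huv heq ↦ by
    have := hA u v huv
    simp_all
  simpa using c.colorable

theorem exists_orientation {k : ℕ} (hG : ∀ S, #(cliquesIn G 2 S) ≤ k * #S) :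
    ∃ f : G.edgeSet → V × Fin k, f.Injective ∧ ∀ e, (f e).1 ∈ e.1 := by
  classical
  let t (e : G.edgeSet) : Finset (V × Fin k) := e.1.toFinset ×ˢ univ
  have hall (s : Finset G.edgeSet) : #s ≤ #(s.biUnion t) := by
    let S : Finset V := s.biUnion fun e ↦ e.1.toFinset
    have ht : s.biUnion t = S ×ˢ univ := by
      ext; simp [t, S]
    calc #s ≤ #(cliquesIn G 2 S) := by
            refine card_le_card_of_injOn (fun e ↦ e.1.toFinset) (fun e he ↦ ?_) ?_
            · obtain ⟨⟨u, v⟩, huv⟩ := e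
              refine mem_cliquesIn.2 ⟨subset_biUnion_of_mem (fun e ↦ e.1.toFinset) he,
                Sym2.card_toFinset_of_not_isDiag _ (G.not_isDiag_of_mem_edgeSet huv), ?_⟩
              simpa [Sym2.toFinset_mk_eq, isClique_pair] using fun _ ↦ huv
            · exact fun e _ e' _ h ↦ Subtype.ext (Sym2.ext fun v ↦ by
                simpa using congrArg (v ∈ ·) h)
      _ ≤ k * #S := hG S
      _ = #(s.biUnion t) := by rw [ht, card_product, card_univ, Fintype.card_fin, mul_comm]
  obtain ⟨f, hf, hft⟩ := (all_card_le_biUnion_card_iff_exists_injective t).1 hall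
  exact ⟨f, hf, fun e ↦ by simpa [t] using hft e⟩

/-- The edges with tail in `A` and label `i`, where `f` sends each edge to a pair
`(tail, label)`. -/
def tailClass {k : ℕ} (f : G.edgeSet → V × Fin k) (A : Set V) (i : Fin k) : Set (Sym2 V) :=
  Subtype.val '' (f ⁻¹' (A ×ˢ {i}))

variable {k : ℕ} {f : G.edgeSet → V × Fin k}

theorem disjoint_tailClass {A B : Set V} {i j : Fin k} (h : Disjoint A B ∨ i ≠ j) :
    Disjoint (tailClass f A i) (tailClass f B j) := by
  refine (Set.disjoint_image_iff Subtype.val_injective).2 (Disjoint.preimage f ?_)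
  simpa [Set.disjoint_prod] using h

theorem isStarForestWithCenters_tailClass {C : Set V} (hf : f.Injective)
    (hfmem : ∀ e, (f e).1 ∈ e.1) (hC : ∀ u v, G.Adj u v → (u ∈ C ↔ v ∉ C)) (i : Fin k) :
    IsStarForestWithCenters (tailClass f Cᶜ i) C := by
  have exists_head {e : G.edgeSet} (he : (f e).1 ∉ C) : ∃ u ∈ C, e.1 = s(u, (f e).1) := by
    obtain ⟨u, hu⟩ := hfmem e
    have hadj : G.Adj (f e).1 u := by simpa [hu] using e.2
    exact ⟨u, (hC u _ hadj.symm).2 he, hu.trans Sym2.eq_swap⟩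
  have tail_eq {e : G.edgeSet} {v : V} (hv : v ∉ C) (hve : v ∈ e.1) (he : (f e).1 ∉ C) :
      (f e).1 = v := by
    obtain ⟨u, hu, heq⟩ := exists_head he
    rw [heq, Sym2.mem_iff] at hve
    exact (hve.resolve_left fun hvu ↦ hv (hvu ▸ hu)).symm
  refine ⟨?_, fun v hv ↦ ?_⟩
  · rintro _ ⟨e, ⟨he, -⟩, rfl⟩
    obtain ⟨u, hu, heq⟩ := exists_head he
    exact ⟨u, (f e).1, heq, hu, he⟩
  · rintro _ ⟨⟨e, ⟨he, hei⟩, rfl⟩, hve⟩ _ ⟨⟨e', ⟨he', hei'⟩, rfl⟩, hve'⟩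
    have htail : (f e).1 = (f e').1 := (tail_eq hv hve he).trans (tail_eq hv hve' he').symm
    exact congrArg Subtype.val (hf (Prod.ext htail (hei.trans hei'.symm)))

theorem tailClass_compl_union_tailClass (f : G.edgeSet → V × Fin 2) (A : Set V) :
    tailClass f Aᶜ 0 ∪ tailClass f Aᶜ 1 ∪ tailClass f A 0 ∪ tailClass f A 1 = G.edgeSet := by
  simp only [tailClass, ← Set.image_union, ← Set.preimage_union]
  have hcover : Aᶜ ×ˢ {0} ∪ Aᶜ ×ˢ {1} ∪ A ×ˢ {0} ∪ A ×ˢ {1} = (Set.univ : Set (V × Fin 2)) := by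
    ext ⟨v, i⟩
    fin_cases i <;> simp [em']
  rw [hcover, Set.preimage_univ, Subtype.coe_image_univ]

end StarForests

end PlanarStarForest

open PlanarStarForest in
theorem stmt_6_general {V : Type*} (G : SimpleGraph V) (hG : G.IsPlanar)
    (V₁ : Set V) (hbip : ∀ u v, G.Adj u v → (u ∈ V₁ ↔ v ∉ V₁)) :
    ∃ (F : Fin 4 → Set (Sym2 V)) (C : Fin 4 → Set V),
      (∀ i, IsStarForestWithCenters (F i) (C i)) ∧
      (Pairwise fun i j => Disjoint (F i) (F j)) ∧
      (F 0 ∪ F 1 ∪ F 2 ∪ F 3 = G.edgeSet) ∧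
      C 0 ⊆ V₁ ∧ C 1 ⊆ V₁ ∧ C 2 ⊆ V₁ᶜ ∧ C 3 ⊆ V₁ᶜ := by
  have hG3 : G.CliqueFree 3 := (colorable_two_of_adj_iff hbip).cliqueFree (by simp)
  obtain ⟨f, hf, hfmem⟩ := exists_orientation (card_cliquesIn_two_le_of_cliqueFree hG hG3)
  have hbip' (u v : V) (huv : G.Adj u v) : u ∈ V₁ᶜ ↔ v ∉ V₁ᶜ := by
    have := hbip u v huv
    simp only [Set.mem_compl_iff]
    tauto
  have hout := isStarForestWithCenters_tailClass hf hfmem hbip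
  have hin := isStarForestWithCenters_tailClass hf hfmem hbip'
  rw [compl_compl] at hin
  refine ⟨![tailClass f V₁ᶜ 0, tailClass f V₁ᶜ 1, tailClass f V₁ 0, tailClass f V₁ 1],
    ![V₁, V₁, V₁ᶜ, V₁ᶜ], ?_, ?_, ?_, le_rfl, le_rfl, le_rfl, le_rfl⟩
  · simp [Fin.forall_fin_succ, hout, hin]
  · intro i j hij
    fin_cases i <;> fin_cases j <;> first
      | exact absurd rfl hij
      | exact disjoint_tailClass (by simp [disjoint_compl_left, disjoint_compl_right])
  · exact tailClass_compl_union_tailClass f V₁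

/-- Every bipartite planar graph can be edge-partitioned into four star
forests, two of which have all their star centers in the first part `V₁` of
the bipartition and two in the second part `V \ V₁`. -/
theorem stmt_6 {V : Type*} [Fintype V] (G : SimpleGraph V) (hG : G.IsPlanar)
    (V₁ : Set V) (hbip : ∀ u v, G.Adj u v → (u ∈ V₁ ↔ v ∉ V₁)) :
    ∃ (F : Fin 4 → Set (Sym2 V)) (C : Fin 4 → Set V),
      (∀ i, IsStarForestWithCenters (F i) (C i)) ∧
      (Pairwise fun i j => Disjoint (F i) (F j)) ∧
      (F 0 ∪ F 1 ∪ F 2 ∪ F 3 = G.edgeSet) ∧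
      C 0 ⊆ V₁ ∧ C 1 ⊆ V₁ ∧ C 2 ⊆ V₁ᶜ ∧ C 3 ⊆ V₁ᶜ :=
  stmt_6_general G hG V₁ hbip
end

section
/- Every connected graph with n vertices and at most n edges can be edge-partitioned into two subgraphs, one of which is a star forest and the other of which is a vertex-disjoint union of a star forest and at most one cycle. -/
open SimpleGraph

/-- `F` is a star forest: a vertex-disjoint union of stars. -/
def IsStarForest {V : Type*} (F : Set (Sym2 V)) : Prop :=
  ∃ C : Set V, IsStarForestWithCenters F C

/-!
Grow a breadth-first forest from the vertex set of a subgraph `H`. Its `|V(G)| - |V(H)|` edges lie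
outside `H`, so when `|E(G)| - |E(H)|` is no larger they are all the edges outside `H`. Split them
by the parity of the depth of their deeper end: in each class no vertex is both a child and a
parent, so each class is a star forest, and the edges whose deeper end has even depth stay away
from `H`. Take for `H` a single vertex if the graph is a tree, and a cycle otherwise.
-/

section

variable {V : Type*}

theorem isStarForest_image_of_mapsTo_compl {p : V → V} {X : Set V} (hp : Set.MapsTo p X Xᶜ) :
    IsStarForest ((fun v ↦ s(v, p v)) '' X) := by
  refine ⟨Xᶜ, ?_, fun v hv ↦ ?_⟩
  · rintro _ ⟨v, hv, rfl⟩
    exact ⟨p v, v, Sym2.eq_swap, hp hv, not_not.2 hv⟩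
  · suffices h : ∀ e ∈ (fun v ↦ s(v, p v)) '' X, v ∈ e → e = s(v, p v) from
      fun e he e' he' ↦ (h e he.1 he.2).trans (h e' he'.1 he'.2).symm
    rintro _ ⟨u, hu, rfl⟩ hvu
    obtain rfl | rfl := Sym2.mem_iff.1 hvu
    · rfl
    · exact absurd (hp hu) hv

theorem injOn_sym2Mk_of_lt {α : Type*} [Preorder α] {p : V → V} {X : Set V} {d : V → α}
    (hd : ∀ v ∈ X, d (p v) < d v) : Set.InjOn (fun v ↦ s(v, p v)) X := by
  intro u hu v hv huv
  obtain ⟨h, -⟩ | ⟨huv', hvu'⟩ := Sym2.eq_iff.1 huv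
  · exact h
  · have huv_lt : d v < d u := hvu' ▸ hd u hu
    have hvu_lt : d u < d v := huv' ▸ hd v hv
    exact absurd huv_lt hvu_lt.asymm

/-- A breadth-first forest of `G` grown from the set `S` of roots: every vertex outside `S` is
joined to a parent one level closer to `S`. The value of `parent` on `S` is irrelevant. -/
structure BreadthFirstForest (G : SimpleGraph V) (S : Set V) where
  depth : V → ℕ
  parent : V → V
  depth_of_mem : ∀ v ∈ S, depth v = 0
  adj_parent : ∀ v ∉ S, G.Adj v (parent v)
  depth_eq_succ : ∀ v ∉ S, depth v = depth (parent v) + 1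

theorem exists_adj_dist_eq_succ {G : SimpleGraph V} {v s : V} (hreach : G.Reachable v s)
    (hvs : v ≠ s) : ∃ u, G.Adj v u ∧ G.dist v s = G.dist u s + 1 := by
  obtain ⟨w, hw⟩ := hreach.exists_walk_length_eq_dist
  cases w with
  | nil => exact absurd rfl hvs
  | @cons _ u _ hvu q =>
    refine ⟨u, hvu, le_antisymm ?_ ?_⟩
    · calc G.dist v s ≤ G.dist v u + G.dist u s := hvu.reachable.dist_triangle_left s
        _ = G.dist u s + 1 := by rw [dist_eq_one_iff_adj.2 hvu, add_comm]
    · rw [← hw, Walk.length_cons]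
      exact Nat.succ_le_succ (dist_le q)

namespace BreadthFirstForest

variable {G : SimpleGraph V} {S : Set V}

theorem nonempty_of_preconnected (hG : G.Preconnected) (hS : S.Nonempty) :
    Nonempty (BreadthFirstForest G S) := by
  have : Nonempty S := hS.to_subtype
  let depth (v : V) : ℕ := ⨅ s : S, G.dist v s
  have depth_le (v : V) {s : V} (hs : s ∈ S) : depth v ≤ G.dist v s :=
    ciInf_le (OrderBot.bddBelow _) (⟨s, hs⟩ : S)
  have exists_dist_eq (v : V) : ∃ s ∈ S, G.dist v s = depth v := by
    obtain ⟨s, hs⟩ := ciInf_mem fun s : S ↦ G.dist v s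
    exact ⟨s, s.2, hs⟩
  have exists_parent (v : V) (hv : v ∉ S) : ∃ u, G.Adj v u ∧ depth v = depth u + 1 := by
    obtain ⟨s, hs, hvs⟩ := exists_dist_eq v
    obtain ⟨u, hvu, hdist⟩ := exists_adj_dist_eq_succ (hG v s) (ne_of_mem_of_not_mem hs hv).symm
    obtain ⟨t, ht, hut⟩ := exists_dist_eq u
    have h_le : depth u ≤ G.dist u s := depth_le u hs
    have h_ge : depth v ≤ 1 + G.dist u t :=
      (depth_le v ht).trans (dist_eq_one_iff_adj.2 hvu ▸ hvu.reachable.dist_triangle_left t)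
    exact ⟨u, hvu, by omega⟩
  choose! parent hparent using exists_parent
  exact ⟨{
    depth, parent
    depth_of_mem := fun v hv ↦ Nat.le_zero.1 ((depth_le v hv).trans_eq dist_self)
    adj_parent := fun v hv ↦ (hparent v hv).1
    depth_eq_succ := fun v hv ↦ (hparent v hv).2 }⟩

variable (T : BreadthFirstForest G S)

/-- The edge from `v` up to its parent in the forest; meaningful only for `v ∉ S`. -/
def parentEdge (v : V) : Sym2 V := s(v, T.parent v)

theorem injOn_parentEdge : Set.InjOn T.parentEdge Sᶜ :=
  injOn_sym2Mk_of_lt (d := T.depth) fun v hv ↦ by simp [T.depth_eq_succ v hv]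

theorem even_depth_parent_iff {v : V} (hv : v ∉ S) :
    Even (T.depth (T.parent v)) ↔ ¬ Even (T.depth v) := by
  rw [T.depth_eq_succ v hv, Nat.even_add_one, not_not]

theorem isStarForest_parentEdge_even :
    IsStarForest (T.parentEdge '' (Sᶜ ∩ {v | Even (T.depth v)})) :=
  isStarForest_image_of_mapsTo_compl fun _ hv hpv ↦ (T.even_depth_parent_iff hv.1).1 hpv.2 hv.2

theorem isStarForest_parentEdge_odd :
    IsStarForest (T.parentEdge '' (Sᶜ \ {v | Even (T.depth v)})) :=
  isStarForest_image_of_mapsTo_compl fun _ hv hpv ↦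
    hpv.2 ((T.even_depth_parent_iff hv.1).2 hv.2)

theorem notMem_of_mem_parentEdge_of_even {v x : V} (hv : v ∉ S) (heven : Even (T.depth v))
    (hx : x ∈ T.parentEdge v) : x ∉ S := by
  obtain rfl | rfl := Sym2.mem_iff.1 hx
  · exact hv
  · intro hpS
    refine (T.even_depth_parent_iff hv).1 ?_ heven
    simp [T.depth_of_mem _ hpS]

theorem disjoint_parentEdge_edgeSet {H : G.Subgraph} (hHS : H.verts ⊆ S) :
    Disjoint (T.parentEdge '' Sᶜ) H.edgeSet := by
  rw [Set.disjoint_left]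
  rintro _ ⟨v, hv, rfl⟩ he
  exact hv (hHS (H.mem_verts_of_mem_edge he (Sym2.mem_mk_left _ _)))

theorem parentEdge_union_edgeSet_eq [Finite V] {H : G.Subgraph} (hHS : H.verts ⊆ S)
    (hcard : G.edgeSet.ncard + S.ncard ≤ Nat.card V + H.edgeSet.ncard) :
    T.parentEdge '' Sᶜ ∪ H.edgeSet = G.edgeSet := by
  have hsub : T.parentEdge '' Sᶜ ∪ H.edgeSet ⊆ G.edgeSet := by
    refine Set.union_subset ?_ H.edgeSet_subset
    rintro _ ⟨v, hv, rfl⟩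
    exact T.adj_parent v hv
  refine Set.eq_of_subset_of_ncard_le hsub ?_
  rw [Set.ncard_union_eq (T.disjoint_parentEdge_edgeSet hHS), T.injOn_parentEdge.ncard_image]
  have := S.ncard_add_ncard_compl
  omega

end BreadthFirstForest

theorem exists_starForest_partition_of_subgraph [Finite V] {G : SimpleGraph V}
    (hG : G.Preconnected) {H : G.Subgraph} (hH : H.verts.Nonempty)
    (hcard : G.edgeSet.ncard + H.verts.ncard ≤ Nat.card V + H.edgeSet.ncard) :
    ∃ A F : Set (Sym2 V), Disjoint A F ∧ Disjoint (A ∪ F) H.edgeSet ∧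
      A ∪ F ∪ H.edgeSet = G.edgeSet ∧ IsStarForest A ∧ IsStarForest F ∧
      ∀ e ∈ F, ∀ x ∈ e, x ∉ H.verts := by
  obtain ⟨T⟩ := BreadthFirstForest.nonempty_of_preconnected hG hH
  have hunion : T.parentEdge '' (H.vertsᶜ \ {v | Even (T.depth v)}) ∪
      T.parentEdge '' (H.vertsᶜ ∩ {v | Even (T.depth v)}) = T.parentEdge '' H.vertsᶜ := by
    rw [← Set.image_union, Set.sdiff_union_inter]
  refine ⟨_, _, ?_, ?_, ?_, T.isStarForest_parentEdge_odd, T.isStarForest_parentEdge_even, ?_⟩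
  · rw [Set.disjoint_iff_inter_eq_empty,
      ← T.injOn_parentEdge.image_inter Set.sdiff_subset Set.inter_subset_left,
      Set.disjoint_sdiff_inter.inter_eq, Set.image_empty]
  · rw [hunion]
    exact T.disjoint_parentEdge_edgeSet subset_rfl
  · rw [hunion]
    exact T.parentEdge_union_edgeSet_eq subset_rfl hcard
  · rintro _ ⟨v, hv, rfl⟩ x hx
    exact T.notMem_of_mem_parentEdge_of_even hv.1 hv.2 hx

theorem ncard_verts_le_ncard_edgeSet_of_isCircuit {G : SimpleGraph V} {v : V} {w : G.Walk v v}
    (hw : w.IsCircuit) : w.toSubgraph.verts.ncard ≤ w.toSubgraph.edgeSet.ncard := by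
  classical
  have hverts : w.toSubgraph.verts = w.support.tail.toFinset := by
    ext x
    rw [Walk.mem_verts_toSubgraph, Finset.mem_coe, List.mem_toFinset, Walk.mem_support_iff]
    refine or_iff_right_of_imp ?_
    rintro rfl
    exact Walk.end_mem_tail_support hw.not_nil
  have hedges : w.toSubgraph.edgeSet = w.edges.toFinset := by
    ext e
    simp
  rw [hverts, hedges, Set.ncard_coe_finset, Set.ncard_coe_finset,
    List.toFinset_card_of_nodup hw.isTrail.edges_nodup, Walk.length_edges]
  exact (List.toFinset_card_le _).trans_eq (by simp)

theorem exists_subgraph_ncard_add_ncard_le [Finite V] {G : SimpleGraph V} (hG : G.Connected)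
    (hm : G.edgeSet.ncard ≤ Nat.card V) :
    ∃ H : G.Subgraph, H.verts.Nonempty ∧
      G.edgeSet.ncard + H.verts.ncard ≤ Nat.card V + H.edgeSet.ncard ∧
      (H.edgeSet = ∅ ∨
        ∃ (v : V) (w : G.Walk v v), w.IsCycle ∧ H.edgeSet = {e | e ∈ w.edges}) := by
  by_cases hacyclic : G.IsAcyclic
  · obtain ⟨r⟩ := hG.nonempty
    have htree : Nat.card G.edgeSet + 1 = Nat.card V :=
      (isTree_iff_connected_and_card.1 ⟨hG, hacyclic⟩).2
    refine ⟨G.singletonSubgraph r, Set.singleton_nonempty r, ?_, .inl (by simp)⟩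
    simpa using htree.le
  · obtain ⟨v, w, hw⟩ : ∃ (v : V) (w : G.Walk v v), w.IsCycle := by
      simpa [IsAcyclic] using hacyclic
    exact ⟨w.toSubgraph, ⟨v, w.start_mem_verts_toSubgraph⟩,
      add_le_add hm (ncard_verts_le_ncard_edgeSet_of_isCircuit hw.isCircuit),
      .inr ⟨v, w, hw, w.edgeSet_toSubgraph⟩⟩

end

/-- Every connected graph with `n` vertices and at most `n` edges can be
edge-partitioned into two subgraphs: a star forest `A`, and a graph `B` that
is the vertex-disjoint union of a star forest and at most one cycle. -/
theorem stmt_8 {V : Type*} [Fintype V] [DecidableEq V]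
    (G : SimpleGraph V) [DecidableRel G.Adj]
    (hconn : G.Connected) (hm : G.edgeFinset.card ≤ Fintype.card V) :
    ∃ A B : Set (Sym2 V),
      Disjoint A B ∧ A ∪ B = G.edgeSet ∧ IsStarForest A ∧
      ∃ SF Cy : Set (Sym2 V),
        Disjoint SF Cy ∧ SF ∪ Cy = B ∧ IsStarForest SF ∧
        (Cy = ∅ ∨ ∃ (v : V) (w : G.Walk v v), w.IsCycle ∧ Cy = {e | e ∈ w.edges}) ∧
        (∀ x : V, (∃ e ∈ SF, x ∈ e) → ¬ ∃ e ∈ Cy, x ∈ e) := by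
  have hncard : G.edgeSet.ncard ≤ Nat.card V := by
    rwa [Set.ncard_eq_toFinset_card', Nat.card_eq_fintype_card]
  obtain ⟨H, hH, hcard, hcycle⟩ := exists_subgraph_ncard_add_ncard_le hconn hncard
  obtain ⟨A, F, hAF, hAFH, hunion, hA, hF, hFH⟩ :=
    exists_starForest_partition_of_subgraph hconn.preconnected hH hcard
  obtain ⟨hAH, hFH'⟩ := Set.disjoint_union_left.1 hAFH
  refine ⟨A, F ∪ H.edgeSet, Set.disjoint_union_right.2 ⟨hAF, hAH⟩, ?_, hA,
    F, H.edgeSet, hFH', rfl, hF, hcycle, ?_⟩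
  · rw [← Set.union_assoc, hunion]
  · rintro x ⟨e, he, hxe⟩ ⟨e', he', hxe'⟩
    exact hFH e he x hxe (H.mem_verts_of_mem_edge he' hxe')
end
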